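/- arXiv:2210.00630 — 4 statements merged into one kernel-verified Lean document; each statement's English description precedes it below -/
import Mathlib

section
/- There exists a constant C > 0 such that for every Horton set H of n ≥ 2 points, every point q of the plane stabs at most C·n·log n empty triangles of H. -/
open scoped Classical

noncomputable section

/-- Euclidean distance between two points of the plane `ℝ × ℝ`. -/
def elen (p q : ℝ × ℝ) : ℝ := Real.sqrt ((p.1 - q.1) ^ 2 + (p.2 - q.2) ^ 2)

/-- Orientation determinant of an ordered triple of points. -/
def orient (a b c : ℝ × ℝ) : ℝ :=
  (b.1 - a.1) * (c.2 - a.2) - (b.2 - a.2) * (c.1 - a.1)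

/-- A planar point set is in general position if no three distinct points are collinear. -/
def GeneralPosition (S : Set (ℝ × ℝ)) : Prop :=
  ∀ a ∈ S, ∀ b ∈ S, ∀ c ∈ S, a ≠ b → a ≠ c → b ≠ c →
    ¬ Collinear ℝ ({a, b, c} : Set (ℝ × ℝ))

/-- No two points of `S` share an `x`-coordinate. -/
def DistinctX (S : Set (ℝ × ℝ)) : Prop :=
  ∀ a ∈ S, ∀ b ∈ S, a ≠ b → a.1 ≠ b.1

/-- `p` lies strictly below the (non-vertical) line through `a` and `b`, where `a.1 < b.1`. -/
def StrictlyBelow (p a b : ℝ × ℝ) : Prop :=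
  (b.1 - a.1) * (p.2 - a.2) < (b.2 - a.2) * (p.1 - a.1)

/-- `p` lies strictly above the (non-vertical) line through `a` and `b`, where `a.1 < b.1`. -/
def StrictlyAbove (p a b : ℝ × ℝ) : Prop :=
  (b.2 - a.2) * (p.1 - a.1) < (b.1 - a.1) * (p.2 - a.2)

/-- `Y` is high above `X`: every line through two points of `Y` is above every point of `X`. -/
def HighAbove (Y X : Set (ℝ × ℝ)) : Prop :=
  ∀ a ∈ Y, ∀ b ∈ Y, a.1 < b.1 → ∀ p ∈ X, StrictlyBelow p a b

/-- `X` is deep below `Y`: every line through two points of `X` is below every point of `Y`. -/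
def DeepBelow (X Y : Set (ℝ × ℝ)) : Prop :=
  ∀ a ∈ X, ∀ b ∈ X, a.1 < b.1 → ∀ p ∈ Y, StrictlyAbove p a b

/-- The even-indexed points of `H` in increasing order of `x`-coordinate (`H₀`). -/
def evenPart (H : Finset (ℝ × ℝ)) : Finset (ℝ × ℝ) :=
  H.filter fun p => Even (H.filter fun q => q.1 < p.1).card

/-- The odd-indexed points of `H` in increasing order of `x`-coordinate (`H₁`). -/
def oddPart (H : Finset (ℝ × ℝ)) : Finset (ℝ × ℝ) :=
  H.filter fun p => ¬ Even (H.filter fun q => q.1 < p.1).card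

/-- Horton sets. -/
inductive IsHorton : Finset (ℝ × ℝ) → Prop
  | small (H : Finset (ℝ × ℝ)) (hgp : GeneralPosition ↑H) (hx : DistinctX ↑H)
      (hcard : H.card ≤ 2) : IsHorton H
  | split (H : Finset (ℝ × ℝ)) (hgp : GeneralPosition ↑H) (hx : DistinctX ↑H)
      (hcard : 2 < H.card) (h0 : IsHorton (evenPart H)) (h1 : IsHorton (oddPart H))
      (hhigh : HighAbove ↑(oddPart H) ↑(evenPart H))
      (hdeep : DeepBelow ↑(evenPart H) ↑(oddPart H)) : IsHorton H

/-- `t` is an empty triangle of the point set `S`: a three-element non-collinear subset of `S`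
whose open interior contains no point of `S`. -/
def IsEmptyTriangleOf (S : Set (ℝ × ℝ)) (t : Finset (ℝ × ℝ)) : Prop :=
  t.card = 3 ∧ (↑t : Set (ℝ × ℝ)) ⊆ S ∧ ¬ Collinear ℝ (↑t : Set (ℝ × ℝ)) ∧
    ∀ p ∈ S, p ∉ interior (convexHull ℝ (↑t : Set (ℝ × ℝ)))

/-- `τ S`: the number of empty triangles of `S`. -/
def tau (S : Set (ℝ × ℝ)) : ℕ :=
  {t : Finset (ℝ × ℝ) | IsEmptyTriangleOf S t}.ncard

/-- The number of empty triangles of `S` stabbed by the point `q`. -/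
def stabbedCount (S : Set (ℝ × ℝ)) (q : ℝ × ℝ) : ℕ :=
  {t : Finset (ℝ × ℝ) | IsEmptyTriangleOf S t ∧
    q ∈ interior (convexHull ℝ (↑t : Set (ℝ × ℝ)))}.ncard

/-- The number of empty triangles of `S` having `q` as a vertex. -/
def incidentCount (S : Set (ℝ × ℝ)) (q : ℝ × ℝ) : ℕ :=
  {t : Finset (ℝ × ℝ) | IsEmptyTriangleOf S t ∧ q ∈ t}.ncard

def InT (a b c q : ℝ × ℝ) : Prop :=
  0 < orient a b c * orient a b q ∧ 0 < orient a b c * orient b c q ∧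
    0 < orient a b c * orient c a q

lemma hull_halfplane (a b : ℝ × ℝ) (D : ℝ) (S : Set (ℝ × ℝ))
    (h : ∀ p ∈ S, 0 ≤ D * orient a b p) : ∀ p ∈ convexHull ℝ S, 0 ≤ D * orient a b p := by
  have hc : Convex ℝ {p : ℝ × ℝ | 0 ≤ D * orient a b p} := by
    intro x hx y hy u v hu hv huv
    simp only [Set.mem_ofPred_eq] at *
    have : D * orient a b (u • x + v • y) = u * (D * orient a b x) + v * (D * orient a b y) := by
      have hu' : u = 1 - v := by linarith
      subst hu'
      simp only [orient, Prod.fst_add, Prod.snd_add, Prod.smul_fst, Prod.smul_snd, smul_eq_mul]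
      ring
    rw [this]
    positivity
  intro p hp
  exact convexHull_min (s := S) h hc hp

lemma hull_halfplane_strict (a b : ℝ × ℝ) (D : ℝ) (S : Set (ℝ × ℝ))
    (h : ∀ p ∈ S, 0 < D * orient a b p) : ∀ p ∈ convexHull ℝ S, 0 < D * orient a b p := by
  have hc : Convex ℝ {p : ℝ × ℝ | 0 < D * orient a b p} := by
    intro x hx y hy u v hu hv huv
    simp only [Set.mem_ofPred_eq] at *
    have : D * orient a b (u • x + v • y) = u * (D * orient a b x) + v * (D * orient a b y) := by
      have hu' : u = 1 - v := by linarith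
      subst hu'
      simp only [orient, Prod.fst_add, Prod.snd_add, Prod.smul_fst, Prod.smul_snd, smul_eq_mul]
      ring
    rw [this]
    rcases hu.lt_or_eq with h1 | h1
    · have := mul_pos h1 hx
      have := mul_nonneg hv hy.le
      linarith
    · have : v = 1 := by linarith
      subst this
      rw [← h1]
      linarith
  intro p hp
  exact convexHull_min (s := S) h hc hp

lemma int_pos (a b c q : ℝ × ℝ) (hD : orient a b c ≠ 0)
    (hq : q ∈ interior (convexHull ℝ ({a, b, c} : Set (ℝ × ℝ)))) :
    0 < orient a b c * orient a b q := by
  by_contra hneg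
  push Not at hneg
  have hhp := hull_halfplane a b (orient a b c) {a, b, c} (by
    intro p hp
    simp only [Set.mem_insert_iff, Set.mem_singleton_iff] at hp
    rcases hp with rfl | rfl | rfl
    · simp [orient]
    · have : orient a p p = 0 := by simp [orient]; ring
      simp [this]
    · exact mul_self_nonneg _)
  have hcont : Filter.Tendsto (fun e : ℝ => q + e • (q - c)) (nhds 0) (nhds q) := by
    have : Continuous (fun e : ℝ => q + e • (q - c)) := by fun_prop
    have := this.tendsto 0
    simpa using this
  have hev := hcont.eventually (isOpen_interior.mem_nhds hq)
  rw [Metric.eventually_nhds_iff] at hev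
  obtain ⟨ε, hε, hev⟩ := hev
  have h1 := hev (y := ε / 2) (by
    rw [Real.dist_eq, sub_zero, abs_of_pos (by linarith)]; linarith)
  have h2 := hhp _ (interior_subset h1)
  have h3 : orient a b c * orient a b (q + (ε / 2) • (q - c)) =
      (1 + ε / 2) * (orient a b c * orient a b q) - (ε / 2) * (orient a b c * orient a b c) := by
    simp only [orient, Prod.fst_add, Prod.snd_add, Prod.smul_fst, Prod.smul_snd, smul_eq_mul,
      Prod.fst_sub, Prod.snd_sub]
    ring
  rw [h3] at h2
  have h4 : 0 < orient a b c * orient a b c := mul_self_pos.mpr hD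
  have h5 : 0 < (ε / 2) * (orient a b c * orient a b c) := by positivity
  nlinarith

lemma orient_rot (a b c : ℝ × ℝ) : orient a b c = orient b c a := by
  simp only [orient]; ring

lemma orient_swap (a b c : ℝ × ℝ) : orient a b c = - orient b a c := by
  simp only [orient]; ring

lemma inT_of_int (a b c q : ℝ × ℝ) (hD : orient a b c ≠ 0)
    (hq : q ∈ interior (convexHull ℝ ({a, b, c} : Set (ℝ × ℝ)))) : InT a b c q := by
  refine ⟨int_pos a b c q hD hq, ?_, ?_⟩
  · have e : ({a, b, c} : Set (ℝ × ℝ)) = {b, c, a} := by ext; simp; tauto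
    rw [e] at hq
    rw [orient_rot a b c] at hD ⊢
    exact int_pos b c a q hD hq
  · have e : ({a, b, c} : Set (ℝ × ℝ)) = {c, a, b} := by ext; simp; tauto
    rw [e] at hq
    rw [← orient_rot c a b] at hD ⊢
    exact int_pos c a b q hD hq

lemma int_of_inT (a b c q : ℝ × ℝ) (h : InT a b c q) :
    q ∈ interior (convexHull ℝ ({a, b, c} : Set (ℝ × ℝ))) := by
  have ho : IsOpen {q : ℝ × ℝ | InT a b c q} := by
    simp only [InT, orient]
    refine IsOpen.and ?_ (IsOpen.and ?_ ?_) <;>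
    exact isOpen_lt (by fun_prop) (by fun_prop)
  refine (interior_maximal ?_ ho) h
  intro p hp
  obtain ⟨h1, h2, h3⟩ := hp
  have hD : orient a b c ≠ 0 := by
    intro h0; rw [h0] at h1; simp at h1
  have hD2 : 0 < orient a b c * orient a b c := mul_self_pos.mpr hD
  have key : p = (orient a b c * orient b c p / (orient a b c * orient a b c)) • a +
      ((orient a b c * orient c a p / (orient a b c * orient a b c)) • b +
      (orient a b c * orient a b p / (orient a b c * orient a b c)) • c) := by
    ext
    · simp only [Prod.fst_add, Prod.smul_fst, smul_eq_mul]
      field_simp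
      simp only [orient]; ring
    · simp only [Prod.snd_add, Prod.smul_snd, smul_eq_mul]
      field_simp
      simp only [orient]; ring
  have hsum : orient a b c * orient b c p / (orient a b c * orient a b c) +
     (orient a b c * orient c a p / (orient a b c * orient a b c) +
      orient a b c * orient a b p / (orient a b c * orient a b c)) = 1 := by
    field_simp
    simp only [orient]; ring
  rw [convexHull_insert (by simp)]
  rw [convexHull_pair, mem_convexJoin]
  set u := orient a b c * orient b c p / (orient a b c * orient a b c) with hu
  set v := orient a b c * orient c a p / (orient a b c * orient a b c) with hv
  set w := orient a b c * orient a b p / (orient a b c * orient a b c) with hw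
  have hup : 0 < u := by positivity
  have hvp : 0 < v := by positivity
  have hwp : 0 < w := by positivity
  refine ⟨a, by simp, (v / (v + w)) • b + (w / (v + w)) • c, ⟨v / (v + w), w / (v + w),
    by positivity, by positivity, by field_simp, rfl⟩, u, v + w, hup.le, by positivity,
    hsum, ?_⟩
  rw [key, smul_add, smul_smul, smul_smul]
  have hvw : v + w ≠ 0 := by positivity
  rw [mul_div_cancel₀ _ hvw, mul_div_cancel₀ _ hvw]

lemma orient_ne_of_not_collinear (a b c : ℝ × ℝ) (hab : a.1 < b.1)
    (h : ¬ Collinear ℝ ({a, b, c} : Set (ℝ × ℝ))) : orient a b c ≠ 0 := by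
  intro h0
  apply h
  rw [collinear_iff_of_mem (p₀ := a) (by simp)]
  have hne : b.1 - a.1 ≠ 0 := by linarith
  refine ⟨b - a, ?_⟩
  intro p hp
  simp only [Set.mem_insert_iff, Set.mem_singleton_iff] at hp
  rcases hp with rfl | rfl | rfl
  · exact ⟨0, by simp⟩
  · exact ⟨1, by simp⟩
  · refine ⟨(p.1 - a.1) / (b.1 - a.1), ?_⟩
    simp only [orient] at h0
    ext
    · simp; field_simp; ring
    · simp; field_simp; linarith

/-- generalized, mirror-symmetric Horton sets -/
inductive GH : ℝ → Finset (ℝ × ℝ) → Prop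
  | small (s : ℝ) (H : Finset (ℝ × ℝ)) (hx : DistinctX ↑H) (hcard : H.card ≤ 2) : GH s H
  | split (s : ℝ) (H A B : Finset (ℝ × ℝ)) (hx : DistinctX ↑H) (hcard : 2 < H.card)
      (hU : H = A ∪ B) (hsum : A.card + B.card = H.card)
      (hA : A.card ≤ (H.card + 1) / 2) (hB : B.card ≤ (H.card + 1) / 2)
      (altA : ∀ a ∈ A, ∀ b ∈ A, a.1 < b.1 → ∃ c ∈ B, a.1 < c.1 ∧ c.1 < b.1)
      (altB : ∀ a ∈ B, ∀ b ∈ B, a.1 < b.1 → ∃ c ∈ A, a.1 < c.1 ∧ c.1 < b.1)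
      (gA : GH s A) (gB : GH s B)
      (high : ∀ a ∈ B, ∀ b ∈ B, a.1 < b.1 → ∀ p ∈ A, s * orient a b p < 0)
      (deep : ∀ a ∈ A, ∀ b ∈ A, a.1 < b.1 → ∀ p ∈ B, 0 < s * orient a b p) : GH s H

lemma GH.neg {s : ℝ} {H : Finset (ℝ × ℝ)} (h : GH s H) : GH (-s) H := by
  induction h with
  | small H hx hcard => exact .small _ _ hx hcard
  | split H A B hx hcard hU hsum hA hB altA altB gA gB high deep ihA ihB =>
    refine .split _ H B A hx hcard (by rw [hU, Finset.union_comm]) (by omega) hB hA altB altA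
      ihB ihA ?_ ?_
    · intro a ha b hb hab p hp
      have := deep a ha b hb hab p hp
      linarith
    · intro a ha b hb hab p hp
      have := high a ha b hb hab p hp
      linarith

/-- pairwise overlapping cap-empty pairs -/
lemma GH.caps {s : ℝ} {H : Finset (ℝ × ℝ)} (h : GH s H) :
    ∀ F : Finset ((ℝ × ℝ) × (ℝ × ℝ)),
    (∀ e ∈ F, e.1 ∈ H ∧ e.2 ∈ H ∧ e.1.1 < e.2.1 ∧
      ∀ p ∈ H, e.1.1 < p.1 → p.1 < e.2.1 → ¬ 0 < s * orient e.1 e.2 p) →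
    (∀ e ∈ F, ∀ f ∈ F, f.1.1 < e.2.1) → F.card ≤ Nat.clog 2 H.card := by
  induction h with
  | small H hx hcard =>
    intro F h1 h2
    rcases F.eq_empty_or_nonempty with rfl | ⟨e0, he0⟩
    · simp
    have hle : F.card ≤ 1 := by
      rw [Finset.card_le_one]
      intro e he f hf
      obtain ⟨e1, e2, e3, -⟩ := h1 e he
      obtain ⟨f1, f2, f3, -⟩ := h1 f hf
      have key : ∀ x ∈ H, x = e.1 ∨ x = e.2 := by
        intro x hxH
        by_contra hcon
        push Not at hcon
        have hne : e.1 ≠ e.2 := by intro h; rw [h] at e3; exact lt_irrefl _ e3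
        have hs : ({x, e.1, e.2} : Finset (ℝ × ℝ)) ⊆ H := by
          intro y hy
          simp only [Finset.mem_insert, Finset.mem_singleton] at hy
          rcases hy with rfl | rfl | rfl <;> assumption
        have := Finset.card_le_card hs
        rw [Finset.card_eq_three.mpr ⟨x, e.1, e.2, hcon.1, hcon.2, hne, rfl⟩] at this
        omega
      have a1 : f.1 = e.1 := by
        rcases key _ f1 with h | h
        · exact h
        · have := h2 e he f hf
          rw [h] at this; exact absurd this (lt_irrefl _)
      have a2 : f.2 = e.2 := by
        rcases key _ f2 with h | h
        · have := h2 f hf e he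
          rw [h] at this; exact absurd this (lt_irrefl _)
        · exact h
      exact (Prod.ext a1 a2).symm
    have h2c : 2 ≤ H.card := by
      obtain ⟨e1, e2, e3, -⟩ := h1 e0 he0
      have : 1 < H.card := Finset.one_lt_card.mpr
        ⟨e0.1, e1, e0.2, e2, by intro h; rw [h] at e3; exact lt_irrefl _ e3⟩
      omega
    have := Nat.clog_pos (b := 2) (by norm_num) h2c
    omega
  | split H A B hx hcard hU hsum hA hB altA altB gA gB high deep ihA ihB =>
    intro F h1 h2
    have hAH : ∀ p ∈ A, p ∈ H := fun p hp => by rw [hU]; exact Finset.mem_union_left _ hp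
    have hBH : ∀ p ∈ B, p ∈ H := fun p hp => by rw [hU]; exact Finset.mem_union_right _ hp
    have hIn : (F.filter fun e => e.1 ∈ B ∧ e.2 ∈ B).card ≤ Nat.clog 2 B.card := by
      apply ihB
      · intro e he
        rw [Finset.mem_filter] at he
        obtain ⟨e1, e2, e3, e4⟩ := h1 e he.1
        exact ⟨he.2.1, he.2.2, e3, fun p hp => e4 p (hBH p hp)⟩
      · intro e he f hf
        exact h2 e (Finset.mem_filter.mp he).1 f (Finset.mem_filter.mp hf).1
    have hOutKey : ∀ e ∈ F, ¬ (e.1 ∈ B ∧ e.2 ∈ B) → ∀ p ∈ H, e.1.1 < p.1 → p.1 < e.2.1 →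
        False := by
      intro e he hn
      obtain ⟨e1, e2, e3, e4⟩ := h1 e he
      have nB : ∀ p ∈ B, e.1.1 < p.1 → p.1 < e.2.1 → (e.1 ∈ A ∧ e.2 ∈ B ∨ e.1 ∈ B ∧ e.2 ∈ A) →
          False := by
        rintro p hp hp1 hp2 (⟨m1, m2⟩ | ⟨m1, m2⟩)
        · have := high p hp e.2 m2 hp2 e.1 m1
          apply e4 p (hBH p hp) hp1 hp2
          have e : orient e.1 e.2 p = - orient p e.2 e.1 := by simp only [orient]; ring
          rw [e]; linarith
        · have := high e.1 m1 p hp hp1 e.2 m2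
          apply e4 p (hBH p hp) hp1 hp2
          have e : orient e.1 e.2 p = - orient e.1 p e.2 := by simp only [orient]; ring
          rw [e]; linarith
      rw [hU, Finset.mem_union] at e1 e2
      have hmix : e.1 ∈ A ∧ e.2 ∈ B ∨ e.1 ∈ B ∧ e.2 ∈ A := by
        rcases e1 with m1 | m1 <;> rcases e2 with m2 | m2
        · obtain ⟨c, hc, hc1, hc2⟩ := altA _ m1 _ m2 e3
          exact absurd (deep _ m1 _ m2 e3 c hc) (e4 c (hBH c hc) hc1 hc2)
        · exact Or.inl ⟨m1, m2⟩
        · exact Or.inr ⟨m1, m2⟩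
        · exact absurd ⟨m1, m2⟩ hn
      intro p hp hp1 hp2
      rw [hU, Finset.mem_union] at hp
      rcases hp with hp | hp
      · rcases hmix with ⟨m1, m2⟩ | ⟨m1, m2⟩
        · obtain ⟨c, hc, hc1, hc2⟩ := altA _ m1 _ hp hp1
          exact nB c hc hc1 (hc2.trans hp2) (Or.inl ⟨m1, m2⟩)
        · obtain ⟨c, hc, hc1, hc2⟩ := altA _ hp _ m2 hp2
          exact nB c hc (hp1.trans hc1) hc2 (Or.inr ⟨m1, m2⟩)
      · exact nB p hp hp1 hp2 hmix
    have hOut : (F.filter fun e => ¬ (e.1 ∈ B ∧ e.2 ∈ B)).card ≤ 1 := by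
      rw [Finset.card_le_one]
      intro e he f hf
      rw [Finset.mem_filter] at he hf
      obtain ⟨e1, e2, e3, -⟩ := h1 e he.1
      obtain ⟨f1, f2, f3, -⟩ := h1 f hf.1
      have o1 := h2 e he.1 f hf.1
      have o2 := h2 f hf.1 e he.1
      have a1 : e.1 = f.1 := by
        by_contra hne
        rcases lt_or_gt_of_ne (hx _ e1 _ f1 hne) with h | h
        · exact hOutKey e he.1 he.2 f.1 f1 h o1
        · exact hOutKey f hf.1 hf.2 e.1 e1 h o2
      have a2 : e.2 = f.2 := by
        by_contra hne
        rcases lt_or_gt_of_ne (hx _ e2 _ f2 hne) with h | h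
        · exact hOutKey f hf.1 hf.2 e.2 e2 o1 h
        · exact hOutKey e he.1 he.2 f.2 f2 o2 h
      exact Prod.ext a1 a2
    have hF := Finset.card_filter_add_card_filter_not (s := F) (fun e => e.1 ∈ B ∧ e.2 ∈ B)
    have hcl : Nat.clog 2 H.card = Nat.clog 2 ((H.card + 1) / 2) + 1 := by
      rw [Nat.clog_of_two_le (by norm_num) (by omega)]
      rfl
    have hm : Nat.clog 2 B.card ≤ Nat.clog 2 ((H.card + 1) / 2) := Nat.clog_mono_right _ hB
    omega

def Stab (H : Finset (ℝ × ℝ)) (q : ℝ × ℝ) : Finset (Finset (ℝ × ℝ)) :=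
  (H.powersetCard 3).filter fun t => IsEmptyTriangleOf ↑H t ∧
    q ∈ interior (convexHull ℝ (↑t : Set (ℝ × ℝ)))

lemma mixed_bound (s : ℝ) (q : ℝ × ℝ) (H A B : Finset (ℝ × ℝ)) (hx : DistinctX ↑H)
    (hAH : A ⊆ H) (gA : GH s A)
    (deep : ∀ a ∈ A, ∀ b ∈ A, a.1 < b.1 → ∀ p ∈ B, 0 < s * orient a b p) :
    ∃ M : Finset (Finset (ℝ × ℝ)), M.card ≤ B.card * Nat.clog 2 A.card ∧
      ∀ a ∈ A, ∀ b ∈ A, ∀ c ∈ B, a ≠ b → IsEmptyTriangleOf ↑H {a, b, c} →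
        q ∈ interior (convexHull ℝ ({a, b, c} : Set (ℝ × ℝ))) → {a, b, c} ∈ M := by
  let F : ℝ × ℝ → Finset ((ℝ × ℝ) × (ℝ × ℝ)) := fun c =>
    (A ×ˢ A).filter fun e => e.1.1 < e.2.1 ∧ IsEmptyTriangleOf ↑H {e.1, e.2, c} ∧
        q ∈ interior (convexHull ℝ ({e.1, e.2, c} : Set (ℝ × ℝ)))
  refine ⟨B.biUnion fun c => (F c).image fun e => {e.1, e.2, c}, ?_, ?_⟩
  · apply Finset.card_biUnion_le_card_mul
    intro c hc
    refine Finset.card_image_le.trans ?_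
    apply gA.caps
    · intro e he
      simp only [F, Finset.mem_filter, Finset.mem_product] at he
      obtain ⟨⟨e1, e2⟩, e3, e4, e5⟩ := he
      refine ⟨e1, e2, e3, ?_⟩
      intro p hp hp1 hp2 hpos
      apply e4.2.2.2 p (hAH hp)
      have : (↑({e.1, e.2, c} : Finset (ℝ × ℝ)) : Set (ℝ × ℝ)) = {e.1, e.2, c} := by simp
      rw [this]
      apply int_of_inT
      have d0 := deep _ e1 _ e2 e3 c hc
      have d1 := deep _ e1 _ hp hp1 c hc
      have d2 := deep _ hp _ e2 hp2 c hc
      rw [orient_rot p] at d2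
      rw [← orient_rot c] at d1
      have hs : 0 < s * s := by
        apply mul_self_pos.mpr
        rintro rfl
        simp at d0
      have aux : ∀ x y : ℝ, 0 < s * x → 0 < s * y → 0 < x * y := by
        intro x y h1 h2
        have := mul_pos h1 h2
        have e : s * x * (s * y) = (s * s) * (x * y) := by ring
        rw [e] at this
        exact (mul_pos_iff_of_pos_left hs).mp this
      exact ⟨aux _ _ d0 hpos, aux _ _ d0 d2, aux _ _ d0 d1⟩
    · have fact : ∀ e ∈ F c, e.1 ∈ A ∧ e.2 ∈ A ∧ 0 < s * orient e.1 e.2 c ∧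
          0 < s * orient e.2 c q ∧ 0 < s * orient c e.1 q := by
        intro e he
        simp only [F, Finset.mem_filter, Finset.mem_product] at he
        obtain ⟨⟨e1, e2⟩, e3, e4, e5⟩ := he
        have d0 := deep _ e1 _ e2 e3 c hc
        have hD : orient e.1 e.2 c ≠ 0 := by intro h; rw [h] at d0; simp at d0
        obtain ⟨i1, i2, i3⟩ := inT_of_int _ _ _ _ hD e5
        have aux : ∀ y : ℝ, 0 < orient e.1 e.2 c * y → 0 < s * y := by
          intro y hy
          have h1 := mul_pos d0 hy
          have e : s * orient e.1 e.2 c * (orient e.1 e.2 c * y) =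
            (orient e.1 e.2 c * orient e.1 e.2 c) * (s * y) := by ring
          rw [e] at h1
          exact (mul_pos_iff_of_pos_left (mul_self_pos.mpr hD)).mp h1
        exact ⟨e1, e2, d0, aux _ i2, aux _ i3⟩
      intro e he f hf
      obtain ⟨e1, e2, e3, e4, e5⟩ := fact e he
      obtain ⟨f1, f2, f3, f4, f5⟩ := fact f hf
      by_contra hcon
      push Not at hcon
      rw [orient_swap] at e4
      rcases hcon.lt_or_eq with h | h
      · have d1 := deep _ e2 _ f1 h c hc
        have elt : e.1.1 < e.2.1 := by
          simp only [F, Finset.mem_filter] at he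
          exact he.2.1
        have d2 := deep _ e1 _ f1 (elt.trans h) c hc
        have pl : (s * orient c f.1 q) * (s * orient e.1 e.2 c) =
          - ((s * orient e.1 f.1 c) * (s * - orient c e.2 q)) -
            (s * orient e.2 f.1 c) * (s * orient c e.1 q) := by
          simp only [orient]; ring
        have p1 := mul_pos f5 e3
        have p2 := mul_pos d2 e4
        have p3 := mul_pos d1 e5
        linarith
      · have : e.2 = f.1 := by
          by_contra hne
          exact hx _ (hAH e2) _ (hAH f1) hne h
        rw [this] at e4
        linarith
  · intro a ha b hb c hc hab hemp hq
    rw [Finset.mem_biUnion]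
    refine ⟨c, hc, ?_⟩
    rw [Finset.mem_image]
    rcases lt_or_gt_of_ne (hx _ (hAH ha) _ (hAH hb) hab) with h | h
    · refine ⟨(a, b), ?_, rfl⟩
      simp only [F, Finset.mem_filter, Finset.mem_product]
      exact ⟨⟨ha, hb⟩, h, hemp, hq⟩
    · refine ⟨(b, a), ?_, Finset.insert_comm _ _ _⟩
      simp only [F, Finset.mem_filter, Finset.mem_product]
      refine ⟨⟨hb, ha⟩, h, ?_, ?_⟩
      · rwa [Finset.insert_comm]
      · rwa [Set.insert_comm]

lemma sorted_triple (H t : Finset (ℝ × ℝ)) (hx : DistinctX ↑H) (ht : t ⊆ H) (h3 : t.card = 3) :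
    ∃ a b c, t = {a, b, c} ∧ a.1 < b.1 ∧ b.1 < c.1 := by
  obtain ⟨a, b, c, hab, hac, hbc, rfl⟩ := Finset.card_eq_three.mp h3
  have ha : a ∈ H := ht (by simp)
  have hb : b ∈ H := ht (by simp)
  have hc : c ∈ H := ht (by simp)
  rcases lt_or_gt_of_ne (hx _ ha _ hb hab) with h1 | h1 <;>
  rcases lt_or_gt_of_ne (hx _ ha _ hc hac) with h2 | h2 <;>
  rcases lt_or_gt_of_ne (hx _ hb _ hc hbc) with h3 | h3
  · exact ⟨a, b, c, rfl, h1, h3⟩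
  · exact ⟨a, c, b, by ext; simp; tauto, h2, h3⟩
  · linarith
  · exact ⟨c, a, b, by ext; simp; tauto, h2, h1⟩
  · exact ⟨b, a, c, by ext; simp; tauto, h1, h2⟩
  · linarith
  · exact ⟨b, c, a, by ext; simp; tauto, h3, h2⟩
  · exact ⟨c, b, a, by ext; simp; tauto, h3, h1⟩

lemma disj (s : ℝ) (q : ℝ × ℝ) (H A B : Finset (ℝ × ℝ)) (hx : DistinctX ↑H)
    (hAH : A ⊆ H)
    (deep : ∀ a ∈ A, ∀ b ∈ A, a.1 < b.1 → ∀ p ∈ B, 0 < s * orient a b p) :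
    Stab A q = ∅ ∨ Stab B q = ∅ := by
  by_contra hcon
  push Not at hcon
  obtain ⟨⟨t, ht⟩, ⟨u, hu⟩⟩ := hcon
  simp only [Stab, Finset.mem_filter, Finset.mem_powersetCard] at ht hu
  obtain ⟨⟨tA, t3⟩, te, tq⟩ := ht
  obtain ⟨⟨uB, u3⟩, ue, uq⟩ := hu
  obtain ⟨a, b, c, rfl, hab, hbc⟩ := sorted_triple H t hx (tA.trans hAH) t3
  have ha : a ∈ A := tA (by simp)
  have hb : b ∈ A := tA (by simp)
  have hc : c ∈ A := tA (by simp)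
  have hcoe : (↑({a, b, c} : Finset (ℝ × ℝ)) : Set (ℝ × ℝ)) = {a, b, c} := by simp
  rw [hcoe] at tq
  have hnc := te.2.2.1
  rw [hcoe] at hnc
  have hD := orient_ne_of_not_collinear a b c hab hnc
  obtain ⟨i1, i2, i3⟩ := inT_of_int _ _ _ _ hD tq
  have up : ∀ x ∈ A, ∀ y ∈ A, x.1 < y.1 → 0 < s * orient x y q := fun x hx' y hy hxy =>
    hull_halfplane_strict x y s ↑u (fun p hp => deep x hx' y hy hxy p (uB hp)) q
      (interior_subset uq)
  have j1 := up a ha b hb hab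
  have j3 := up a ha c hc (hab.trans hbc)
  rw [orient_swap c a q] at i3
  have e : (s * orient a b q) * (orient a b c * - orient a c q) =
    - ((s * orient a c q) * (orient a b c * orient a b q)) := by ring
  have k1 := mul_pos j1 i3
  have k2 := mul_pos j3 i1
  linarith

lemma emptyTri_mono {S T : Set (ℝ × ℝ)} {t : Finset (ℝ × ℝ)} (hST : S ⊆ T)
    (h : IsEmptyTriangleOf T t) (ht : (↑t : Set (ℝ × ℝ)) ⊆ S) : IsEmptyTriangleOf S t :=
  ⟨h.1, ht, h.2.2.1, fun p hp => h.2.2.2 p (hST hp)⟩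

set_option maxHeartbeats 1000000 in
lemma GH.stab {s : ℝ} {H : Finset (ℝ × ℝ)} (h : GH s H) (q : ℝ × ℝ) :
    (Stab H q).card ≤ 3 * H.card * Nat.clog 2 H.card := by
  induction h with
  | small H hx hcard =>
    have : Stab H q = ∅ := by
      rw [Stab, Finset.powersetCard_eq_empty.mpr (by omega)]; simp
    simp [this]
  | split H A B hx hcard hU hsum hA hB altA altB gA gB high deep ihA ihB =>
    have hAH : A ⊆ H := by rw [hU]; exact Finset.subset_union_left
    have hBH : B ⊆ H := by rw [hU]; exact Finset.subset_union_right
    obtain ⟨M, hM, hM'⟩ := mixed_bound s q H A B hx hAH gA deep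
    obtain ⟨N, hN, hN'⟩ := mixed_bound (-s) q H B A hx hBH gB.neg (by
      intro a ha b hb hab p hp
      have := high a ha b hb hab p hp
      linarith)
    have hsub : Stab H q ⊆ (Stab A q ∪ Stab B q) ∪ (M ∪ N) := by
      intro t ht
      simp only [Stab, Finset.mem_filter, Finset.mem_powersetCard] at ht
      obtain ⟨⟨tH, t3⟩, te, tq⟩ := ht
      have monoA : t ⊆ A → t ∈ Stab A q := fun h => by
        simp only [Stab, Finset.mem_filter, Finset.mem_powersetCard]
        exact ⟨⟨h, t3⟩, emptyTri_mono (by exact_mod_cast hAH) te (by exact_mod_cast h), tq⟩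
      have monoB : t ⊆ B → t ∈ Stab B q := fun h => by
        simp only [Stab, Finset.mem_filter, Finset.mem_powersetCard]
        exact ⟨⟨h, t3⟩, emptyTri_mono (by exact_mod_cast hBH) te (by exact_mod_cast h), tq⟩
      have mixA : ∀ a ∈ A, ∀ b ∈ A, ∀ c ∈ B, a ≠ b → t = {a, b, c} → t ∈ M := by
        intro a ha b hb c hc hab e
        subst e
        exact hM' a ha b hb c hc hab te (by simpa using tq)
      have mixB : ∀ a ∈ B, ∀ b ∈ B, ∀ c ∈ A, a ≠ b → t = {a, b, c} → t ∈ N := by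
        intro a ha b hb c hc hab e
        subst e
        exact hN' a ha b hb c hc hab te (by simpa using tq)
      obtain ⟨a, b, c, hab, hac, hbc, e⟩ := Finset.card_eq_three.mp t3
      have ha : a ∈ A ∨ a ∈ B := by
        rw [← Finset.mem_union, ← hU]; exact tH (by simp [e])
      have hb : b ∈ A ∨ b ∈ B := by
        rw [← Finset.mem_union, ← hU]; exact tH (by simp [e])
      have hc : c ∈ A ∨ c ∈ B := by
        rw [← Finset.mem_union, ← hU]; exact tH (by simp [e])
      have sub : ∀ X : Finset (ℝ × ℝ), a ∈ X → b ∈ X → c ∈ X → t ⊆ X := by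
        intro X h1 h2 h3 y hy
        rw [e] at hy
        simp only [Finset.mem_insert, Finset.mem_singleton] at hy
        rcases hy with rfl | rfl | rfl <;> assumption
      have e2 : t = {a, c, b} := by rw [e, Finset.pair_comm b c]
      have e3 : t = {b, c, a} := by rw [e, Finset.insert_comm a b, Finset.pair_comm a c]
      simp only [Finset.mem_union]
      rcases ha with ha | ha <;> rcases hb with hb | hb <;> rcases hc with hc | hc
      · exact Or.inl (Or.inl (monoA (sub A ha hb hc)))
      · exact Or.inr (Or.inl (mixA a ha b hb c hc hab e))
      · exact Or.inr (Or.inl (mixA a ha c hc b hb hac e2))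
      · exact Or.inr (Or.inr (mixB b hb c hc a ha hbc e3))
      · exact Or.inr (Or.inl (mixA b hb c hc a ha hbc e3))
      · exact Or.inr (Or.inr (mixB a ha c hc b hb hac e2))
      · exact Or.inr (Or.inr (mixB a ha b hb c hc hab e))
      · exact Or.inl (Or.inr (monoB (sub B ha hb hc)))
    have hc1 := (Finset.card_le_card hsub).trans (Finset.card_union_le _ _)
    have hc2 := Finset.card_union_le M N
    set L := Nat.clog 2 H.card with hL
    have lA : Nat.clog 2 A.card ≤ L := Nat.clog_mono_right _ (by omega)
    have lB : Nat.clog 2 B.card ≤ L := Nat.clog_mono_right _ (by omega)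
    have hAB : (Stab A q ∪ Stab B q).card ≤ 3 * ((H.card + 1) / 2) * L := by
      rcases disj s q H A B hx hAH deep with h | h
      · rw [h, Finset.empty_union]
        refine ihB.trans ?_
        gcongr
      · rw [h, Finset.union_empty]
        refine ihA.trans ?_
        gcongr
    have hMN : B.card * Nat.clog 2 A.card + A.card * Nat.clog 2 B.card ≤ H.card * L := by
      rw [← hsum, add_mul, add_comm]
      gcongr
    have hfin : 3 * ((H.card + 1) / 2) * L + H.card * L ≤ 3 * H.card * L := by
      rw [← add_mul]
      apply Nat.mul_le_mul_right
      omega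
    omega

def rk (H : Finset (ℝ × ℝ)) (p : ℝ × ℝ) : ℕ := (H.filter fun q => q.1 < p.1).card

lemma rk_succ (H : Finset (ℝ × ℝ)) (hx : DistinctX ↑H) (a b : ℝ × ℝ) (ha : a ∈ H) (hb : b ∈ H)
    (hab : a.1 < b.1) : ∃ p ∈ H, a.1 < p.1 ∧ p.1 ≤ b.1 ∧ rk H p = rk H a + 1 := by
  obtain ⟨p, hp, hmin⟩ := Finset.exists_min_image (H.filter fun q => a.1 < q.1) (fun q => q.1)
    ⟨b, by simp [hb, hab]⟩
  rw [Finset.mem_filter] at hp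
  refine ⟨p, hp.1, hp.2, hmin b (by simp [hb, hab]), ?_⟩
  have : (H.filter fun q => q.1 < p.1) = insert a (H.filter fun q => q.1 < a.1) := by
    ext x
    simp only [Finset.mem_filter, Finset.mem_insert]
    constructor
    · rintro ⟨h1, h2⟩
      by_cases hxa : x = a
      · exact Or.inl hxa
      · rcases lt_or_gt_of_ne (hx _ h1 _ ha hxa) with h | h
        · exact Or.inr ⟨h1, h⟩
        · have := hmin x (by simp [h1, h])
          linarith
    · rintro (rfl | ⟨h1, h2⟩)
      · exact ⟨ha, hp.2⟩
      · exact ⟨h1, h2.trans hp.2⟩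
  rw [rk, this, Finset.card_insert_of_notMem (by simp), rk]

lemma rk_mono (H : Finset (ℝ × ℝ)) (a b : ℝ × ℝ) (ha : a ∈ H) (hab : a.1 < b.1) :
    rk H a < rk H b := by
  apply Finset.card_lt_card
  rw [Finset.ssubset_iff_of_subset]
  · exact ⟨a, by simp [ha, hab], by simp⟩
  · intro x hx
    simp only [Finset.mem_filter] at *
    exact ⟨hx.1, hx.2.trans hab⟩

lemma rk_lt (H : Finset (ℝ × ℝ)) (a : ℝ × ℝ) (ha : a ∈ H) : rk H a < H.card := by
  apply Finset.card_lt_card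
  rw [Finset.ssubset_iff_of_subset (Finset.filter_subset _ _)]
  exact ⟨a, ha, by simp⟩

lemma part_card (H X : Finset (ℝ × ℝ)) (hx : DistinctX ↑H) (hX : X ⊆ H) (r : ℕ)
    (hr : ∀ p ∈ X, rk H p % 2 = r) : X.card ≤ (H.card + 1) / 2 := by
  rw [← Finset.card_range ((H.card + 1) / 2)]
  apply Finset.card_le_card_of_injOn (fun p => rk H p / 2)
  · intro p hp
    have := rk_lt H p (hX hp)
    simp only [Finset.coe_range, Set.mem_Iio]
    omega
  · intro a ha b hb hab
    simp only at hab
    have h1 := hr a ha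
    have h2 := hr b hb
    have h3 : rk H a = rk H b := by omega
    by_contra hne
    rcases lt_or_gt_of_ne (hx _ (hX ha) _ (hX hb) hne) with h | h
    · have := rk_mono H a b (hX ha) h; omega
    · have := rk_mono H b a (hX hb) h; omega

lemma IsHorton.gh {H : Finset (ℝ × ℝ)} (h : IsHorton H) : GH 1 H := by
  induction h with
  | small H hgp hx hcard => exact .small _ _ hx hcard
  | split H hgp hx hcard h0 h1 hhigh hdeep ih0 ih1 =>
    have me : ∀ p, p ∈ evenPart H ↔ p ∈ H ∧ rk H p % 2 = 0 := by
      intro p; simp only [evenPart, Finset.mem_filter, rk, Nat.even_iff]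
    have mo : ∀ p, p ∈ oddPart H ↔ p ∈ H ∧ rk H p % 2 = 1 := by
      intro p; simp only [oddPart, Finset.mem_filter, rk, Nat.not_even_iff]
    have alt : ∀ a ∈ H, ∀ b ∈ H, a.1 < b.1 → rk H a % 2 = rk H b % 2 →
        ∃ c ∈ H, a.1 < c.1 ∧ c.1 < b.1 ∧ rk H c = rk H a + 1 := by
      intro a ha b hb hab hpar
      obtain ⟨p, hp, h1, h2, h3⟩ := rk_succ H hx a b ha hb hab
      refine ⟨p, hp, h1, lt_of_le_of_ne h2 ?_, h3⟩
      apply hx _ hp _ hb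
      rintro rfl
      omega
    refine .split 1 H (evenPart H) (oddPart H) hx hcard ?_ ?_ ?_ ?_ ?_ ?_ ih0 ih1 ?_ ?_
    · exact (Finset.filter_union_filter_not_eq _ _).symm
    · exact Finset.card_filter_add_card_filter_not _
    · exact part_card H _ hx (Finset.filter_subset _ _) 0 fun p hp => ((me p).mp hp).2
    · exact part_card H _ hx (Finset.filter_subset _ _) 1 fun p hp => ((mo p).mp hp).2
    · intro a ha b hb hab
      rw [me] at ha hb
      obtain ⟨c, hc, h1, h2, h3⟩ := alt a ha.1 b hb.1 hab (by omega)
      exact ⟨c, (mo c).mpr ⟨hc, by omega⟩, h1, h2⟩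
    · intro a ha b hb hab
      rw [mo] at ha hb
      obtain ⟨c, hc, h1, h2, h3⟩ := alt a ha.1 b hb.1 hab (by omega)
      exact ⟨c, (me c).mpr ⟨hc, by omega⟩, h1, h2⟩
    · intro a ha b hb hab p hp
      have := hhigh a ha b hb hab p hp
      simp only [StrictlyBelow] at this
      simp only [orient]; linarith
    · intro a ha b hb hab p hp
      have := hdeep a ha b hb hab p hp
      simp only [StrictlyAbove] at this
      simp only [orient]; linarith

lemma clog_le (n : ℕ) (hn : 2 ≤ n) : (Nat.clog 2 n : ℝ) ≤ 4 * Real.log n := by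
  have h1 : 2 ^ (Nat.clog 2 n).pred < n := Nat.pow_pred_clog_lt_self (by norm_num) (by omega)
  have hl2 : (0.69 : ℝ) < Real.log 2 := by have := Real.log_two_gt_d9; linarith
  have h2 : ((Nat.clog 2 n).pred : ℝ) * Real.log 2 ≤ Real.log n := by
    rw [← Real.log_pow]
    apply Real.log_le_log (by positivity)
    exact_mod_cast h1.le
  have h3 : Real.log 2 ≤ Real.log n := by
    apply Real.log_le_log (by norm_num)
    exact_mod_cast hn
  have h4 : (Nat.clog 2 n : ℝ) ≤ ((Nat.clog 2 n).pred : ℝ) + 1 := by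
    have : Nat.clog 2 n ≤ (Nat.clog 2 n).pred + 1 := by rw [Nat.pred_eq_sub_one]; omega
    exact_mod_cast this
  have h5 : (0 : ℝ) ≤ ((Nat.clog 2 n).pred : ℝ) := by positivity
  nlinarith

/-- Every point of the plane stabs `O(n log n)` empty triangles of a Horton set of `n` points. -/
theorem horton_stabbed_bound :
    ∃ C : ℝ, 0 < C ∧ ∀ H : Finset (ℝ × ℝ), IsHorton H → 2 ≤ H.card →
      ∀ q : ℝ × ℝ,
        (stabbedCount ↑H q : ℝ) ≤ C * (H.card : ℝ) * Real.log (H.card : ℝ) := by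
  refine ⟨12, by norm_num, ?_⟩
  intro H hH hn q
  have h1 : stabbedCount ↑H q = (Stab H q).card := by
    rw [stabbedCount, ← Set.ncard_coe_finset]
    congr 1
    ext t
    simp only [Stab, Finset.coe_filter, Finset.mem_powersetCard, Set.mem_ofPred_eq]
    constructor
    · rintro ⟨h1, h2⟩
      exact ⟨⟨by exact_mod_cast h1.2.1, h1.1⟩, h1, h2⟩
    · rintro ⟨-, h⟩
      exact h
  have h2 : ((Stab H q).card : ℝ) ≤ 3 * H.card * Nat.clog 2 H.card := by
    exact_mod_cast hH.gh.stab q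
  have h3 := clog_le H.card hn
  rw [h1]
  have h4 : (3 * H.card * Nat.clog 2 H.card : ℝ) ≤ 3 * H.card * (4 * Real.log H.card) := by
    gcongr
  linarith
end
end

section
/- There exists a constant C > 0 such that for every Horton set H of n ≥ 2 points, every point q ∈ H is a vertex of at most C·n·log n empty triangles of H. -/
open scoped Classical

noncomputable section

def WW (s : ℝ) (q a c : ℝ × ℝ) : Prop := 0 < s * (a.1 - q.1) * orient q a c

def XBtw (c q a : ℝ × ℝ) : Prop := (c.1 - q.1) * (c.1 - a.1) < 0

def Vis (s : ℝ) (H : Finset (ℝ × ℝ)) (q a : ℝ × ℝ) : Prop :=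
  ∀ c ∈ H, XBtw c q a → ¬ WW s q a c

def NN (s : ℝ) (H : Finset (ℝ × ℝ)) (q : ℝ × ℝ) : Finset (ℝ × ℝ) :=
  H.filter fun a => a ≠ q ∧ Vis s H q a

def TT (H : Finset (ℝ × ℝ)) (q : ℝ × ℝ) : Finset (Finset (ℝ × ℝ)) :=
  (H.powersetCard 3).filter fun t => IsEmptyTriangleOf ↑H t ∧ q ∈ t

structure Spl (s : ℝ) (H A B : Finset (ℝ × ℝ)) : Prop where
  dx : DistinctX ↑H
  un : H = A ∪ B
  ca : A.card ≤ (H.card + 1) / 2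
  cb : B.card ≤ (H.card + 1) / 2
  dj : ∀ a ∈ A, a ∉ B
  ba : ∀ a ∈ A, ∀ b ∈ A, a.1 < b.1 → ∃ c ∈ B, a.1 < c.1 ∧ c.1 < b.1
  bb : ∀ a ∈ B, ∀ b ∈ B, a.1 < b.1 → ∃ c ∈ A, a.1 < c.1 ∧ c.1 < b.1
  wa : ∀ a ∈ A, ∀ b ∈ A, a ≠ b → ∀ p ∈ B, WW s a b p
  wb : ∀ a ∈ B, ∀ b ∈ B, a ≠ b → ∀ p ∈ A, WW (-s) a b p

theorem Spl.swap {s : ℝ} {H A B : Finset (ℝ × ℝ)} (h : Spl s H A B) : Spl (-s) H B A where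
  dx := h.dx
  un := by rw [h.un, Finset.union_comm]
  ca := h.cb
  cb := h.ca
  dj := fun a hb ha => h.dj a ha hb
  ba := h.bb
  bb := h.ba
  wa := h.wb
  wb := by rw [neg_neg]; exact h.wa

theorem Spl.btwA {s : ℝ} {H A B : Finset (ℝ × ℝ)} (h : Spl s H A B) {a b : ℝ × ℝ}
    (ha : a ∈ A) (hb : b ∈ A) (hab : a ≠ b) : ∃ c ∈ B, XBtw c a b := by
  have hx : a.1 ≠ b.1 := h.dx a (by simp [h.un, ha]) b (by simp [h.un, hb]) hab
  rcases lt_or_gt_of_ne hx with hl | hl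
  · obtain ⟨c, hc, h1, h2⟩ := h.ba a ha b hb hl
    exact ⟨c, hc, mul_neg_of_pos_of_neg (by linarith) (by linarith)⟩
  · obtain ⟨c, hc, h1, h2⟩ := h.ba b hb a ha hl
    exact ⟨c, hc, mul_neg_of_neg_of_pos (by linarith) (by linarith)⟩

theorem WW.symm {s : ℝ} {a b c : ℝ × ℝ} (h : WW s a b c) : WW s b a c := by
  unfold WW orient at *
  linarith

theorem XBtw.symm {c q a : ℝ × ℝ} (h : XBtw c q a) : XBtw c a q := by
  unfold XBtw at *
  linarith

theorem Vis.symm {s : ℝ} {H : Finset (ℝ × ℝ)} {q a : ℝ × ℝ} (h : Vis s H q a) : Vis s H a q :=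
  fun c hc hb hw => h c hc hb.symm hw.symm

theorem geo1 {s : ℝ} {q a c : ℝ × ℝ} (h : WW (-s) c a q) (hb : XBtw c q a) : WW s q a c := by
  unfold WW XBtw at *
  have e : orient c a q = - orient q a c := by unfold orient; ring
  rw [e] at h
  have h' : 0 < (s * orient q a c) * (a.1 - c.1) := by linarith
  have : 0 < (s * orient q a c) * (a.1 - q.1) := by
    rcases mul_pos_iff.1 h' with ⟨h1, h2⟩ | ⟨h1, h2⟩
    · have : 0 < c.1 - q.1 := by
        by_contra hn
        nlinarith [mul_nonneg_of_nonpos_of_nonpos (not_lt.1 hn) (by linarith : c.1 - a.1 ≤ 0)]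
      exact mul_pos h1 (by linarith)
    · have : c.1 - q.1 < 0 := by
        by_contra hn
        nlinarith [mul_nonneg (not_lt.1 hn) (by linarith : 0 ≤ c.1 - a.1)]
      exact mul_pos_of_neg_of_neg h1 (by linarith)
  linarith

theorem tri_interior {k : ℝ} {u v w c : ℝ × ℝ} (h1 : 0 < k * orient u v c)
    (h2 : 0 < k * orient v w c) (h3 : 0 < k * orient w u c) :
    c ∈ interior (convexHull ℝ ({u, v, w} : Set (ℝ × ℝ))) := by
  have hsub : {x : ℝ × ℝ | 0 < k * orient u v x ∧ 0 < k * orient v w x ∧ 0 < k * orient w u x} ⊆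
      convexHull ℝ ({u, v, w} : Set (ℝ × ℝ)) := by
    rintro x ⟨g1, g2, g3⟩
    have hD : 0 < k * orient u v w := by
      have : k * orient u v w = k * orient u v x + k * orient v w x + k * orient w u x := by
        unfold orient; ring
      linarith
    have hx : x = ((k * orient v w x) / (k * orient u v w)) • u +
        ((k * orient w u x) / (k * orient u v w)) • v +
        ((k * orient u v x) / (k * orient u v w)) • w := by
      ext
      · simp only [Prod.fst_add, Prod.smul_fst, smul_eq_mul]
        rw [div_mul_eq_mul_div, div_mul_eq_mul_div, div_mul_eq_mul_div, ← add_div, ← add_div,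
          eq_div_iff hD.ne']
        unfold orient; ring
      · simp only [Prod.snd_add, Prod.smul_snd, smul_eq_mul]
        rw [div_mul_eq_mul_div, div_mul_eq_mul_div, div_mul_eq_mul_div, ← add_div, ← add_div,
          eq_div_iff hD.ne']
        unfold orient; ring
    have hu : u ∈ convexHull ℝ ({u, v, w} : Set (ℝ × ℝ)) := subset_convexHull ℝ _ (by simp)
    have hv : v ∈ convexHull ℝ ({u, v, w} : Set (ℝ × ℝ)) := subset_convexHull ℝ _ (by simp)
    have hw : w ∈ convexHull ℝ ({u, v, w} : Set (ℝ × ℝ)) := subset_convexHull ℝ _ (by simp)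
    rw [hx]
    have hc := convex_convexHull ℝ ({u, v, w} : Set (ℝ × ℝ))
    have hs : (k * orient v w x) / (k * orient u v w) + (k * orient w u x) / (k * orient u v w) +
        (k * orient u v x) / (k * orient u v w) = 1 := by
      rw [← add_div, ← add_div, div_eq_one_iff_eq hD.ne']
      unfold orient; ring
    have q1 := (div_pos g1 hD).le
    have q2 := (div_pos g2 hD).le
    have q3 := (div_pos g3 hD).le
    generalize (k * orient v w x) / (k * orient u v w) = α at *
    generalize (k * orient w u x) / (k * orient u v w) = β at *
    generalize (k * orient u v x) / (k * orient u v w) = γ at *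
    have := hc.sum_mem (t := Finset.univ) (w := ![α, β, γ]) (z := ![u, v, w])
      (by intro i _; fin_cases i <;> simpa) (by simpa [Fin.sum_univ_three] using hs)
      (by intro i _; fin_cases i <;> simpa)
    simpa [Fin.sum_univ_three] using this
  refine interior_maximal hsub ?_ ⟨h1, h2, h3⟩
  unfold orient
  refine IsOpen.and (isOpen_lt (by fun_prop) (by fun_prop)) (IsOpen.and
    (isOpen_lt (by fun_prop) (by fun_prop)) (isOpen_lt (by fun_prop) (by fun_prop)))

theorem geo2 {s : ℝ} {u v w c : ℝ × ℝ} (hb : XBtw c u v) (h1 : WW s u v c) (h2 : WW s u c w)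
    (h3 : WW s c v w) : c ∈ interior (convexHull ℝ ({u, v, w} : Set (ℝ × ℝ))) := by
  unfold WW XBtw at *
  have e2 : orient u c w = orient w u c := by unfold orient; ring
  have e3 : orient c v w = orient v w c := by unfold orient; ring
  rw [e2] at h2
  rw [e3] at h3
  rcases mul_neg_iff.1 hb with ⟨g1, g2⟩ | ⟨g1, g2⟩
  · apply tri_interior (k := s)
    · exact pos_of_mul_pos_left (b := v.1 - u.1) (by linarith) (by linarith)
    · exact pos_of_mul_pos_left (b := v.1 - c.1) (by linarith) (by linarith)
    · exact pos_of_mul_pos_left (b := c.1 - u.1) (by linarith) (by linarith)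
  · apply tri_interior (k := -s)
    · exact pos_of_mul_pos_left (b := u.1 - v.1) (by linarith) (by linarith)
    · exact pos_of_mul_pos_left (b := c.1 - v.1) (by linarith) (by linarith)
    · exact pos_of_mul_pos_left (b := u.1 - c.1) (by linarith) (by linarith)

theorem next_pt {H : Finset (ℝ × ℝ)} (hx : DistinctX ↑H) {a b : ℝ × ℝ} (ha : a ∈ H) (hb : b ∈ H)
    (hab : a.1 < b.1) : ∃ c ∈ H, a.1 < c.1 ∧ c.1 ≤ b.1 ∧
      (H.filter fun q => q.1 < c.1).card = (H.filter fun q => q.1 < a.1).card + 1 := by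
  obtain ⟨c, hc, hmin⟩ := Finset.exists_min_image (H.filter fun q => a.1 < q.1) (fun q => q.1)
    ⟨b, by simp [hb, hab]⟩
  simp only [Finset.mem_filter] at hc hmin
  refine ⟨c, hc.1, hc.2, hmin b ⟨hb, hab⟩, ?_⟩
  have : (H.filter fun q => q.1 < c.1) = insert a (H.filter fun q => q.1 < a.1) := by
    ext q
    simp only [Finset.mem_filter, Finset.mem_insert]
    constructor
    · rintro ⟨h1, h2⟩
      by_cases hq : q = a
      · exact Or.inl hq
      · right
        refine ⟨h1, ?_⟩
        by_contra hn
        have := hx q h1 a ha hq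
        have h3 : a.1 < q.1 := lt_of_le_of_ne (not_lt.1 hn) (Ne.symm this)
        linarith [hmin q ⟨h1, h3⟩]
    · rintro (h | ⟨h1, h2⟩)
      · subst h; exact ⟨ha, hc.2⟩
      · exact ⟨h1, by linarith [hc.2]⟩
  rw [this, Finset.card_insert_of_notMem (by simp)]

theorem rank_lt {H : Finset (ℝ × ℝ)} {a b : ℝ × ℝ} (ha : a ∈ H) (hab : a.1 < b.1) :
    (H.filter fun q => q.1 < a.1).card < (H.filter fun q => q.1 < b.1).card := by
  apply Finset.card_lt_card
  refine Finset.ssubset_iff_subset_ne.2 ⟨?_, ?_⟩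
  · intro q
    simp only [Finset.mem_filter]
    rintro ⟨h1, h2⟩
    exact ⟨h1, by linarith⟩
  · intro h
    have : a ∈ H.filter fun q => q.1 < b.1 := by simp [ha, hab]
    rw [← h] at this
    simp at this

theorem rank_inj {H : Finset (ℝ × ℝ)} (hx : DistinctX ↑H) {a b : ℝ × ℝ} (ha : a ∈ H) (hb : b ∈ H)
    (h : (H.filter fun q => q.1 < a.1).card = (H.filter fun q => q.1 < b.1).card) : a = b := by
  by_contra hne
  rcases lt_or_gt_of_ne (hx a ha b hb hne) with hl | hl
  · have := rank_lt ha hl; omega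
  · have := rank_lt hb hl; omega

theorem rank_bd {H : Finset (ℝ × ℝ)} {a : ℝ × ℝ} (ha : a ∈ H) :
    (H.filter fun q => q.1 < a.1).card < H.card := by
  apply Finset.card_lt_card
  refine Finset.ssubset_iff_subset_ne.2 ⟨Finset.filter_subset _ _, fun h => ?_⟩
  rw [← h] at ha
  simp at ha

theorem part_card_s5 {H P : Finset (ℝ × ℝ)} (hx : DistinctX ↑H) (hP : P ⊆ H) (e : ℕ)
    (hp : ∀ p ∈ P, (H.filter fun q => q.1 < p.1).card % 2 = e) : P.card ≤ (H.card + 1) / 2 := by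
  rw [← Finset.card_range ((H.card + 1) / 2)]
  apply Finset.card_le_card_of_injOn (fun p => (H.filter fun q => q.1 < p.1).card / 2)
  · intro p hpp
    have := rank_bd (hP hpp)
    simp only [Finset.coe_range, Set.mem_Iio]
    omega
  · intro a ha b hb hab
    have h1 := hp a ha
    have h2 := hp b hb
    apply rank_inj hx (hP ha) (hP hb)
    simp only at hab
    omega

theorem mem_even {H : Finset (ℝ × ℝ)} {p : ℝ × ℝ} : p ∈ evenPart H ↔
    p ∈ H ∧ (H.filter fun q => q.1 < p.1).card % 2 = 0 := by
  simp only [evenPart, Finset.mem_filter, Nat.even_iff]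

theorem mem_odd {H : Finset (ℝ × ℝ)} {p : ℝ × ℝ} : p ∈ oddPart H ↔
    p ∈ H ∧ (H.filter fun q => q.1 < p.1).card % 2 = 1 := by
  simp only [oddPart, Finset.mem_filter, Nat.even_iff, Nat.mod_two_ne_zero]

theorem spl_of {H : Finset (ℝ × ℝ)} (hx : DistinctX ↑H)
    (hhigh : HighAbove ↑(oddPart H) ↑(evenPart H))
    (hdeep : DeepBelow ↑(evenPart H) ↑(oddPart H)) : Spl 1 H (evenPart H) (oddPart H) where
  dx := hx
  un := by
    ext p
    rw [Finset.mem_union, mem_even, mem_odd]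
    have := Nat.mod_two_eq_zero_or_one (H.filter fun q => q.1 < p.1).card
    tauto
  ca := part_card_s5 hx (Finset.filter_subset _ _) 0 (fun p hp => (mem_even.1 hp).2)
  cb := part_card_s5 hx (Finset.filter_subset _ _) 1 (fun p hp => (mem_odd.1 hp).2)
  dj := by
    intro a ha hb
    have h1 := (mem_even.1 ha).2
    have h2 := (mem_odd.1 hb).2
    omega
  ba := by
    intro a ha b hb hab
    rw [mem_even] at ha hb
    obtain ⟨c, hc, h1, h2, h3⟩ := next_pt hx ha.1 hb.1 hab
    refine ⟨c, mem_odd.2 ⟨hc, by omega⟩, h1, lt_of_le_of_ne h2 (hx c hc b hb.1 ?_)⟩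
    rintro rfl
    omega
  bb := by
    intro a ha b hb hab
    rw [mem_odd] at ha hb
    obtain ⟨c, hc, h1, h2, h3⟩ := next_pt hx ha.1 hb.1 hab
    refine ⟨c, mem_even.2 ⟨hc, by omega⟩, h1, lt_of_le_of_ne h2 (hx c hc b hb.1 ?_)⟩
    rintro rfl
    omega
  wa := by
    intro a ha b hb hab p hp
    have key : ∀ a ∈ evenPart H, ∀ b ∈ evenPart H, a.1 < b.1 → WW 1 a b p := by
      intro a ha b hb hl
      have := hdeep a ha b hb hl p hp
      unfold StrictlyAbove at this
      unfold WW orient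
      rw [one_mul]
      exact mul_pos (by linarith) (by linarith)
    rcases lt_or_gt_of_ne (hx a (mem_even.1 ha).1 b (mem_even.1 hb).1 hab) with hl | hl
    · exact key a ha b hb hl
    · exact (key b hb a ha hl).symm
  wb := by
    intro a ha b hb hab p hp
    have key : ∀ a ∈ oddPart H, ∀ b ∈ oddPart H, a.1 < b.1 → WW (-1) a b p := by
      intro a ha b hb hl
      have := hhigh a ha b hb hl p hp
      unfold StrictlyBelow at this
      unfold WW orient
      have h2 := mul_pos (sub_pos.2 hl) (sub_pos.2 this)
      linarith
    rcases lt_or_gt_of_ne (hx a (mem_odd.1 ha).1 b (mem_odd.1 hb).1 hab) with hl | hl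
    · exact key a ha b hb hl
    · exact (key b hb a ha hl).symm

theorem two_sides {S : Finset (ℝ × ℝ)} {q : ℝ × ℝ} (h0 : ∀ a ∈ S, a.1 ≠ q.1)
    (h : ∀ a ∈ S, ∀ b ∈ S, a ≠ b → (a.1 - q.1) * (b.1 - q.1) < 0) : S.card ≤ 2 := by
  by_contra hn
  obtain ⟨a, ha, b, hb, c, hc, hab, hac, hbc⟩ := Finset.two_lt_card.1 (not_le.1 hn)
  have h1 := h a ha b hb hab
  have h2 := h a ha c hc hac
  have h3 := h b hb c hc hbc
  rcases lt_or_gt_of_ne (h0 a ha) with g | g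
  · nlinarith [mul_pos_of_neg_of_neg h1 h2, mul_pos_of_neg_of_neg h1 h3, sq_nonneg (a.1-q.1),
      mul_nonneg_of_nonpos_of_nonpos h3.le (neg_nonpos.2 (sq_nonneg (a.1-q.1)))]
  · nlinarith [mul_pos_of_neg_of_neg h1 h2, mul_pos_of_neg_of_neg h1 h3, sq_nonneg (a.1-q.1),
      mul_nonneg_of_nonpos_of_nonpos h3.le (neg_nonpos.2 (sq_nonneg (a.1-q.1)))]

/-- same side implies one is between -/
theorem same_side {q a b : ℝ × ℝ} (h : ¬ (a.1 - q.1) * (b.1 - q.1) < 0) (ha : a.1 ≠ q.1)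
    (hb : b.1 ≠ q.1) (hab : a.1 ≠ b.1) : XBtw a q b ∨ XBtw b q a := by
  unfold XBtw
  rcases lt_or_gt_of_ne ha with g | g <;> rcases lt_or_gt_of_ne hb with g' | g' <;>
    rcases lt_or_gt_of_ne hab with g'' | g'' <;>
    first
    | exact absurd (mul_neg_of_neg_of_pos (by linarith) (by linarith)) h
    | exact absurd (mul_neg_of_pos_of_neg (by linarith) (by linarith)) h
    | exact Or.inl (mul_neg_of_neg_of_pos (by linarith) (by linarith))
    | exact Or.inl (mul_neg_of_pos_of_neg (by linarith) (by linarith))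
    | exact Or.inr (mul_neg_of_neg_of_pos (by linarith) (by linarith))
    | exact Or.inr (mul_neg_of_pos_of_neg (by linarith) (by linarith))

theorem XBtw.trans {q a b c : ℝ × ℝ} (h : XBtw a q b) (h' : XBtw c a b) : XBtw c q b := by
  unfold XBtw at *
  rcases mul_neg_iff.1 h with ⟨g1, g2⟩ | ⟨g1, g2⟩ <;>
  rcases mul_neg_iff.1 h' with ⟨g3, g4⟩ | ⟨g3, g4⟩ <;>
    first
    | (exfalso; linarith)
    | exact mul_neg_of_neg_of_pos (by linarith) (by linarith)
    | exact mul_neg_of_pos_of_neg (by linarith) (by linarith)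

theorem deg_step {s : ℝ} {H A B : Finset (ℝ × ℝ)} (h : Spl s H A B) (d : ℕ)
    (hB : ∀ q ∈ B, (NN s B q).card ≤ d) : ∀ q ∈ H, (NN s H q).card ≤ d + 2 := by
  intro q hq
  have hAH : A ⊆ H := by rw [h.un]; exact Finset.subset_union_left
  have hBH : B ⊆ H := by rw [h.un]; exact Finset.subset_union_right
  have hq' := hq
  rw [h.un, Finset.mem_union] at hq'
  rcases hq' with hqA | hqB
  · have hsub : ∀ a ∈ NN s H q, a ∈ B ∧ a ≠ q ∧ Vis s H q a := by
      intro a ha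
      obtain ⟨h1, h2, h3⟩ := Finset.mem_filter.1 ha
      refine ⟨?_, h2, h3⟩
      rw [h.un, Finset.mem_union] at h1
      rcases h1 with h1 | h1
      · obtain ⟨c, hc, hb⟩ := h.btwA hqA h1 h2.symm
        exact absurd (h.wa q hqA a h1 h2.symm c hc) (h3 c (hBH hc) hb)
      · exact h1
    have key : ∀ a ∈ NN s H q, ∀ b ∈ NN s H q, a ≠ b → ¬ XBtw a q b := by
      intro a ha b hb hab hbt
      obtain ⟨h1, h2, h3⟩ := hsub a ha
      obtain ⟨g1, g2, g3⟩ := hsub b hb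
      exact g3 a (hBH h1) hbt (geo1 (h.wb a h1 b g1 hab q hqA) hbt)
    have : (NN s H q).card ≤ 2 := by
      have h0 : ∀ a ∈ NN s H q, a.1 ≠ q.1 := fun a ha =>
        h.dx a (hBH (hsub a ha).1) q hq (hsub a ha).2.1
      apply two_sides h0
      intro a ha b hb hab
      by_contra hn
      rcases same_side hn (h0 a ha) (h0 b hb)
        (h.dx a (hBH (hsub a ha).1) b (hBH (hsub b hb).1) hab) with g | g
      · exact key a ha b hb hab g
      · exact key b hb a ha hab.symm g
    omega
  · have hsub : NN s H q ⊆ NN s B q ∪ (NN s H q).filter (fun a => a ∈ A) := by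
      intro a ha
      obtain ⟨h1, h2, h3⟩ := Finset.mem_filter.1 ha
      rw [h.un, Finset.mem_union] at h1
      rw [Finset.mem_union]
      rcases h1 with h1 | h1
      · right; exact Finset.mem_filter.2 ⟨ha, h1⟩
      · left; exact Finset.mem_filter.2 ⟨h1, h2, fun c hc => h3 c (hBH hc)⟩
    have hm : ∀ a ∈ (NN s H q).filter (fun a => a ∈ A), a ∈ A ∧ a ≠ q ∧ Vis s H q a := by
      intro a ha
      obtain ⟨h1, h2⟩ := Finset.mem_filter.1 ha
      exact ⟨h2, (Finset.mem_filter.1 h1).2⟩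
    generalize (NN s H q).filter (fun a => a ∈ A) = S at hsub hm
    have key : ∀ a ∈ S, ∀ b ∈ S, a ≠ b → ¬ XBtw a q b := by
      intro a ha b hb hab hbt
      obtain ⟨h1, h2, h3⟩ := hm a ha
      obtain ⟨g1, g2, g3⟩ := hm b hb
      obtain ⟨c, hc, hcb⟩ := h.btwA h1 g1 hab
      have hcq := hbt.trans hcb
      have hne : c ≠ q := by
        rintro rfl
        unfold XBtw at hcq
        simp at hcq
      exact g3 c (hBH hc) hcq (geo1 (h.wb c hc q hqB hne b g1) hcq.symm).symm
    have : S.card ≤ 2 := by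
      have h0 : ∀ a ∈ S, a.1 ≠ q.1 := fun a ha =>
        h.dx a (hAH (hm a ha).1) q hq (hm a ha).2.1
      apply two_sides h0
      intro a ha b hb hab
      by_contra hn
      rcases same_side hn (h0 a ha) (h0 b hb)
        (h.dx a (hAH (hm a ha).1) b (hAH (hm b hb).1) hab) with g | g
      · exact key a ha b hb hab g
      · exact key b hb a ha hab.symm g
    have h1 := Finset.card_le_card hsub
    have h2 := Finset.card_union_le (NN s B q) S
    have h3 := hB q hqB
    omega

theorem clog_half {n m : ℕ} (hn : 2 < n) (hm : m ≤ (n + 1) / 2) :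
    Nat.clog 2 m + 1 ≤ Nat.clog 2 n := by
  rw [Nat.clog_of_two_le (by norm_num) (by omega : 2 ≤ n)]
  have : Nat.clog 2 m ≤ Nat.clog 2 ((n + 2 - 1) / 2) := Nat.clog_mono_right 2 (by omega)
  omega

theorem deg_bound {H : Finset (ℝ × ℝ)} (hH : IsHorton H) :
    ∀ s : ℝ, s = 1 ∨ s = -1 → ∀ q ∈ H, (NN s H q).card ≤ 2 * Nat.clog 2 H.card := by
  induction hH with
  | small H hgp hx hcard =>
    intro s _ q hq
    have h1 : NN s H q ⊆ H.erase q := by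
      intro a ha
      obtain ⟨h1, h2, h3⟩ := Finset.mem_filter.1 ha
      exact Finset.mem_erase.2 ⟨h2, h1⟩
    have h2 := Finset.card_le_card h1
    rw [Finset.card_erase_of_mem hq] at h2
    by_cases hc : H.card = 2
    · have : 0 < Nat.clog 2 H.card := Nat.clog_pos (by norm_num) (by omega)
      omega
    · omega
  | split H hgp hx hcard h0 h1 hhigh hdeep ih0 ih1 =>
    intro s hs q hq
    have hS := spl_of hx hhigh hdeep
    rcases hs with rfl | rfl
    · have := deg_step hS _ (ih1 1 (Or.inl rfl)) q hq
      have := clog_half hcard hS.cb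
      omega
    · have := deg_step hS.swap _ (ih0 (-1) (Or.inr rfl)) q hq
      have := clog_half hcard hS.ca
      omega

theorem vis_of_empty {s : ℝ} {H P R : Finset (ℝ × ℝ)} (h : Spl s H P R) {u v w : ℝ × ℝ}
    (hu : u ∈ P) (hv : v ∈ P) (hw : w ∈ R)
    (he : ∀ p ∈ H, p ∉ interior (convexHull ℝ ({u, v, w} : Set (ℝ × ℝ)))) : Vis s P u v := by
  intro c hc hb hW
  have hne1 : u ≠ c := by rintro rfl; unfold XBtw at hb; simp at hb
  have hne2 : c ≠ v := by rintro rfl; unfold XBtw at hb; simp at hb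
  refine he c (by rw [h.un]; exact Finset.mem_union_left _ hc) ?_
  exact geo2 hb hW (h.wa u hu c hc hne1 w hw) (h.wa c hc v hv hne2 w hw)

theorem tri_step {s : ℝ} {H P R : Finset (ℝ × ℝ)} (h : Spl s H P R) {q : ℝ × ℝ} (hq : q ∈ P)
    (d : ℕ) (hP : (NN s P q).card ≤ d) (hR : ∀ a ∈ R, (NN (-s) R a).card ≤ d) :
    (TT H q).card ≤ (TT P q).card + 2 * (H.card * d) := by
  have hPH : P ⊆ H := by rw [h.un]; exact Finset.subset_union_left
  have hRH : R ⊆ H := by rw [h.un]; exact Finset.subset_union_right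
  have hsub : TT H q ⊆ (TT P q ∪
      (R.biUnion fun b => (NN s P q).image fun a => ({q, a, b} : Finset (ℝ × ℝ)))) ∪
      (R.biUnion fun a => (NN (-s) R a).image fun b => ({q, a, b} : Finset (ℝ × ℝ))) := by
    intro t ht
    obtain ⟨h1, ⟨hc3, hsubH, hcol, hemp⟩, hqt⟩ := Finset.mem_filter.1 ht
    have he2 : (t.erase q).card = 2 := by rw [Finset.card_erase_of_mem hqt, hc3]
    obtain ⟨a, b, hab, hE⟩ := Finset.card_eq_two.1 he2
    have hte : t = {q, a, b} := by rw [← Finset.insert_erase hqt, hE]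
    have haq : a ≠ q := Finset.ne_of_mem_erase (by rw [hE]; simp : a ∈ t.erase q)
    have hbq : b ≠ q := Finset.ne_of_mem_erase (by rw [hE]; simp : b ∈ t.erase q)
    have haH : a ∈ P ∪ R := by rw [← h.un]; exact hsubH (by simp [hte])
    have hbH : b ∈ P ∪ R := by rw [← h.un]; exact hsubH (by simp [hte])
    have hcoe : (↑t : Set (ℝ × ℝ)) = {q, a, b} := by rw [hte]; simp
    have hemp' : ∀ p ∈ H, p ∉ interior (convexHull ℝ ({q, a, b} : Set (ℝ × ℝ))) := by
      rw [← hcoe]; exact hemp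
    have p1 : ({q, a, b} : Set (ℝ × ℝ)) = {q, b, a} := by rw [Set.pair_comm]
    have p2 : ({q, a, b} : Set (ℝ × ℝ)) = {a, b, q} := by ext; simp; tauto
    rw [Finset.mem_union] at haH hbH
    rw [Finset.mem_union, Finset.mem_union]
    rcases haH with ha | ha <;> rcases hbH with hb | hb
    · left; left
      have htP : t ⊆ P := by
        rw [hte]
        intro x hx
        simp only [Finset.mem_insert, Finset.mem_singleton] at hx
        rcases hx with rfl | rfl | rfl <;> assumption
      exact Finset.mem_filter.2 ⟨Finset.mem_powersetCard.2 ⟨htP, hc3⟩,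
        ⟨hc3, by exact_mod_cast htP, hcol, fun p hp => hemp p (hPH hp)⟩, hqt⟩
    · left; right
      rw [Finset.mem_biUnion]
      refine ⟨b, hb, Finset.mem_image.2 ⟨a, ?_, hte.symm⟩⟩
      exact Finset.mem_filter.2 ⟨ha, haq, vis_of_empty h hq ha hb hemp'⟩
    · left; right
      rw [Finset.mem_biUnion]
      refine ⟨a, ha, Finset.mem_image.2 ⟨b, ?_, ?_⟩⟩
      · rw [p1] at hemp'
        exact Finset.mem_filter.2 ⟨hb, hbq, vis_of_empty h hq hb ha hemp'⟩
      · rw [hte, Finset.pair_comm]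
    · right
      rw [Finset.mem_biUnion]
      refine ⟨a, ha, Finset.mem_image.2 ⟨b, ?_, hte.symm⟩⟩
      rw [p2] at hemp'
      exact Finset.mem_filter.2 ⟨hb, hab.symm, vis_of_empty h.swap ha hb hq hemp'⟩
  have c0 := Finset.card_le_card hsub
  have c1 : (R.biUnion fun b => (NN s P q).image fun a => ({q, a, b} : Finset (ℝ × ℝ))).card
      ≤ R.card * d :=
    Finset.card_biUnion_le_card_mul _ _ _ fun b _ => Finset.card_image_le.trans hP
  have c2 : (R.biUnion fun a => (NN (-s) R a).image fun b => ({q, a, b} : Finset (ℝ × ℝ))).card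
      ≤ R.card * d :=
    Finset.card_biUnion_le_card_mul _ _ _ fun b hb => Finset.card_image_le.trans (hR b hb)
  have c3 : R.card * d ≤ H.card * d := Nat.mul_le_mul_right _ (Finset.card_le_card hRH)
  have u1 := Finset.card_union_le (TT P q ∪
      (R.biUnion fun b => (NN s P q).image fun a => ({q, a, b} : Finset (ℝ × ℝ))))
      (R.biUnion fun a => (NN (-s) R a).image fun b => ({q, a, b} : Finset (ℝ × ℝ)))
  have u2 := Finset.card_union_le (TT P q)
      (R.biUnion fun b => (NN s P q).image fun a => ({q, a, b} : Finset (ℝ × ℝ)))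
  omega

theorem arith_step {n p L l : ℕ} (hn : 2 < n) (hp : p ≤ (n + 1) / 2) (hl : l + 1 ≤ L) :
    12 * (p * l) + 2 * (n * (2 * L)) ≤ 12 * (n * L) := by
  have h1 : 3 * p ≤ 2 * n := by omega
  have h2 : 3 * p * l ≤ 2 * n * L := Nat.mul_le_mul h1 (by omega)
  nlinarith

theorem tri_bound {H : Finset (ℝ × ℝ)} (hH : IsHorton H) :
    ∀ q ∈ H, (TT H q).card ≤ 12 * (H.card * Nat.clog 2 H.card) := by
  induction hH with
  | small H hgp hx hcard =>
    intro q hq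
    have : TT H q = ∅ := by
      unfold TT
      rw [Finset.powersetCard_eq_empty.2 (by omega)]
      simp
    rw [this]
    simp
  | split H hgp hx hcard h0 h1 hhigh hdeep ih0 ih1 =>
    intro q hq
    have hS := spl_of hx hhigh hdeep
    have l0 := clog_half hcard hS.ca
    have l1 := clog_half hcard hS.cb
    have hq' := hq
    rw [hS.un, Finset.mem_union] at hq'
    rcases hq' with hq' | hq'
    · have := tri_step hS hq' (2 * Nat.clog 2 H.card)
        ((deg_bound h0 1 (Or.inl rfl) q hq').trans (by omega))
        (fun a ha => (deg_bound h1 (-1) (Or.inr rfl) a ha).trans (by omega))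
      have := ih0 q hq'
      have := arith_step hcard hS.ca l0
      omega
    · have := tri_step hS.swap hq' (2 * Nat.clog 2 H.card)
        ((deg_bound h1 (-1) (Or.inr rfl) q hq').trans (by omega))
        (fun a ha => (deg_bound h0 (- -1) (Or.inl (by norm_num)) a ha).trans (by omega))
      have := ih1 q hq'
      have := arith_step hcard hS.cb l1
      omega

theorem clog_log {n : ℕ} (hn : 2 ≤ n) : (Nat.clog 2 n : ℝ) ≤ 4 * Real.log n := by
  have h1 : 2 ^ (Nat.clog 2 n - 1) < n := Nat.pow_pred_clog_lt_self (by norm_num) (by omega)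
  have hpos : 0 < Nat.clog 2 n := Nat.clog_pos (by norm_num) hn
  obtain ⟨k, hk⟩ : ∃ k, Nat.clog 2 n = k + 1 := ⟨Nat.clog 2 n - 1, by omega⟩
  rw [hk] at h1 ⊢
  simp only [Nat.add_sub_cancel] at h1
  have h2 : (2 : ℝ) ^ k ≤ n := by exact_mod_cast h1.le
  have h3 : (k : ℝ) * Real.log 2 ≤ Real.log n := by
    rw [← Real.log_pow]
    exact Real.log_le_log (by positivity) h2
  have h4 : Real.log 2 ≤ Real.log n := Real.log_le_log (by norm_num) (by exact_mod_cast hn)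
  have h5 := Real.log_two_gt_d9
  push_cast
  have h6 : (0 : ℝ) ≤ k := by positivity
  nlinarith

theorem incident_eq (H : Finset (ℝ × ℝ)) (q : ℝ × ℝ) : incidentCount ↑H q = (TT H q).card := by
  unfold incidentCount
  rw [← Set.ncard_coe_finset]
  congr 1
  ext t
  simp only [TT, Set.mem_ofPred_eq, Finset.coe_filter, Finset.mem_powersetCard]
  constructor
  · rintro ⟨h1, h2⟩
    exact ⟨⟨by exact_mod_cast h1.2.1, h1.1⟩, h1, h2⟩
  · rintro ⟨_, h⟩
    exact h

/-- Every point of a Horton set of `n` points is a vertex of `O(n log n)` empty triangles. -/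
theorem horton_incident_bound :
    ∃ C : ℝ, 0 < C ∧ ∀ H : Finset (ℝ × ℝ), IsHorton H → 2 ≤ H.card →
      ∀ q ∈ H,
        (incidentCount ↑H q : ℝ) ≤ C * (H.card : ℝ) * Real.log (H.card : ℝ) := by
  refine ⟨48, by norm_num, fun H hH hn q hq => ?_⟩
  rw [incident_eq]
  have h1 : ((TT H q).card : ℝ) ≤ 12 * (H.card * Nat.clog 2 H.card) := by
    exact_mod_cast tri_bound hH q hq
  have h2 := clog_log hn
  have h3 : (H.card : ℝ) * Nat.clog 2 H.card ≤ H.card * (4 * Real.log H.card) :=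
    mul_le_mul_of_nonneg_left h2 (by positivity)
  linarith
end
end

section
/- Let Δ be a triangle with vertices in ℤ × ℤ. If two edges of Δ each contain at least two points of ℤ × ℤ in their relative interiors, then there is a point of ℤ × ℤ in the interior of Δ. -/
open scoped Classical

noncomputable section

/-- The canonical embedding of the integer lattice `ℤ × ℤ` into the plane. -/
def toR (p : ℤ × ℤ) : ℝ × ℝ := ((p.1 : ℝ), (p.2 : ℝ))

/-- A point of the plane is a lattice point if it lies in `ℤ × ℤ`. -/
def IsLatticePt (p : ℝ × ℝ) : Prop := ∃ q : ℤ × ℤ, p = toR q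

/-- The open segment `pq` contains at least two lattice points. -/
def TwoLatticeInOpenSeg (p q : ℝ × ℝ) : Prop :=
  ∃ u v : ℝ × ℝ, u ≠ v ∧ IsLatticePt u ∧ IsLatticePt v ∧
    u ∈ openSegment ℝ p q ∧ v ∈ openSegment ℝ p q

theorem aux_third {p q : ℝ × ℝ} (h : TwoLatticeInOpenSeg p q) (hp : IsLatticePt p)
    (hq : IsLatticePt q) : ∃ r : ℝ, 0 < r ∧ r ≤ 1 / 3 ∧
      ∃ m n : ℤ, r * (q.1 - p.1) = m ∧ r * (q.2 - p.2) = n := by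
  obtain ⟨u, v, huv, hu, hv, hu', hv'⟩ := h
  rw [openSegment_eq_image_lineMap] at hu' hv'
  obtain ⟨s, ⟨hs0, hs1⟩, rfl⟩ := hu'
  obtain ⟨t, ⟨ht0, ht1⟩, rfl⟩ := hv'
  have hst : s ≠ t := fun h => huv (by rw [h])
  clear huv
  wlog hlt : s < t generalizing s t
  · exact this t ht0 ht1 hv s hs0 hs1 hu hst.symm (lt_of_le_of_ne (not_lt.mp hlt) hst.symm)
  obtain ⟨⟨x, y⟩, hx⟩ := hu
  obtain ⟨⟨z, w⟩, hz⟩ := hv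
  obtain ⟨⟨p1, p2⟩, rfl⟩ := hp
  obtain ⟨⟨q1, q2⟩, rfl⟩ := hq
  simp only [AffineMap.lineMap_apply, toR, Prod.ext_iff, vsub_eq_sub, vadd_eq_add, Prod.fst_add,
    Prod.snd_add, Prod.smul_fst, Prod.smul_snd, Prod.fst_sub, Prod.snd_sub, smul_eq_mul] at hx hz
  obtain ⟨hx1, hx2⟩ := hx
  obtain ⟨hz1, hz2⟩ := hz
  simp only [toR]
  by_cases h1 : s ≤ 1 / 3
  · exact ⟨s, hs0, h1, x - p1, y - p2, by push_cast; linarith, by push_cast; linarith⟩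
  by_cases h2 : t - s ≤ 1 / 3
  · exact ⟨t - s, by linarith, h2, z - x, w - y, by push_cast; linarith, by push_cast; linarith⟩
  · exact ⟨1 - t, by linarith, by linarith, q1 - z, q2 - w, by push_cast; linarith,
      by push_cast; linarith⟩

theorem aux_orient {a b c : ℝ × ℝ} (h : ¬ Collinear ℝ ({a, b, c} : Set (ℝ × ℝ))) :
    orient a b c ≠ 0 := by
  intro h0
  apply h
  by_cases hab : a = b
  · subst hab
    simpa using collinear_pair ℝ a c
  rw [collinear_iff_of_mem (p₀ := a) (by simp)]
  have hN : (b.1 - a.1) ^ 2 + (b.2 - a.2) ^ 2 ≠ 0 := by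
    intro hN
    apply hab
    ext <;> nlinarith [sq_nonneg (b.1 - a.1), sq_nonneg (b.2 - a.2)]
  refine ⟨b - a, ?_⟩
  intro p hp
  simp only [Set.mem_insert_iff, Set.mem_singleton_iff] at hp
  rcases hp with rfl | rfl | rfl
  · exact ⟨0, by simp⟩
  · exact ⟨1, by simp⟩
  · refine ⟨((p.1 - a.1) * (b.1 - a.1) + (p.2 - a.2) * (b.2 - a.2)) /
      ((b.1 - a.1) ^ 2 + (b.2 - a.2) ^ 2), ?_⟩
    unfold orient at h0
    ext
    · simp only [vadd_eq_add, Prod.fst_add, Prod.smul_fst, Prod.fst_sub, smul_eq_mul]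
      field_simp
      linear_combination (-(b.2 - a.2)) * h0
    · simp only [vadd_eq_add, Prod.snd_add, Prod.smul_snd, Prod.snd_sub, smul_eq_mul]
      field_simp
      linear_combination (b.1 - a.1) * h0

theorem aux_interior {a b c p : ℝ × ℝ} (hD : orient a b c ≠ 0) (s t : ℝ) (hs : 0 < s) (ht : 0 < t)
    (hst : s + t < 1) (h1 : p.1 = a.1 + s * (b.1 - a.1) + t * (c.1 - a.1))
    (h2 : p.2 = a.2 + s * (b.2 - a.2) + t * (c.2 - a.2)) :
    p ∈ interior (convexHull ℝ ({a, b, c} : Set (ℝ × ℝ))) := by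
  rw [mem_interior]
  refine ⟨{x | 0 < orient a x c / orient a b c ∧ 0 < orient a b x / orient a b c ∧
    orient a x c / orient a b c + orient a b x / orient a b c < 1}, ?_, ?_, ?_⟩
  · rintro x ⟨hx1, hx2, hx3⟩
    set σ := orient a x c / orient a b c with hσ
    set τ := orient a b x / orient a b c with hτ
    rw [eq_div_iff hD] at hσ hτ
    have hx : x = (1 - σ - τ) • a + σ • b + τ • c := by
      unfold orient at hD hσ hτ
      ext
      · simp only [Prod.fst_add, Prod.smul_fst, smul_eq_mul]
        apply mul_left_cancel₀ hD
        linear_combination (-(b.1 - a.1)) * hσ - (c.1 - a.1) * hτ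
      · simp only [Prod.snd_add, Prod.smul_snd, smul_eq_mul]
        apply mul_left_cancel₀ hD
        linear_combination (-(b.2 - a.2)) * hσ - (c.2 - a.2) * hτ
    have hcv := convex_convexHull ℝ ({a, b, c} : Set (ℝ × ℝ))
    have ha : a ∈ convexHull ℝ ({a, b, c} : Set (ℝ × ℝ)) := subset_convexHull _ _ (by simp)
    have hb : b ∈ convexHull ℝ ({a, b, c} : Set (ℝ × ℝ)) := subset_convexHull _ _ (by simp)
    have hc : c ∈ convexHull ℝ ({a, b, c} : Set (ℝ × ℝ)) := subset_convexHull _ _ (by simp)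
    have := hcv.sum_mem (t := Finset.univ) (w := ![1 - σ - τ, σ, τ]) (z := ![a, b, c])
      (by intro i _; fin_cases i <;> simp <;> linarith)
      (by simp [Fin.sum_univ_three]; ring)
      (by intro i _; fin_cases i <;> simp only [] <;> assumption)
    rw [hx]
    simpa [Fin.sum_univ_three] using this
  · have c1 : Continuous fun x => orient a x c / orient a b c := by unfold orient; fun_prop
    have c2 : Continuous fun x => orient a b x / orient a b c := by unfold orient; fun_prop
    exact (isOpen_lt continuous_const c1).inter
      ((isOpen_lt continuous_const c2).inter (isOpen_lt (c1.add c2) continuous_const))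
  · have e1 : orient a p c / orient a b c = s := by
      rw [div_eq_iff hD]; unfold orient; rw [h1, h2]; ring
    have e2 : orient a b p / orient a b c = t := by
      rw [div_eq_iff hD]; unfold orient; rw [h1, h2]; ring
    simp only [Set.mem_ofPred_eq, e1, e2]
    exact ⟨hs, ht, hst⟩

theorem aux_main (a b c : ℤ × ℤ)
    (hnc : ¬ Collinear ℝ ({toR a, toR b, toR c} : Set (ℝ × ℝ)))
    (hb : TwoLatticeInOpenSeg (toR a) (toR b)) (hc : TwoLatticeInOpenSeg (toR a) (toR c)) :
    ∃ p : ℝ × ℝ, IsLatticePt p ∧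
      p ∈ interior (convexHull ℝ ({toR a, toR b, toR c} : Set (ℝ × ℝ))) := by
  obtain ⟨s, hs, hs3, m, n, h1, h2⟩ := aux_third hb ⟨a, rfl⟩ ⟨b, rfl⟩
  obtain ⟨t, ht, ht3, k, l, h3, h4⟩ := aux_third hc ⟨a, rfl⟩ ⟨c, rfl⟩
  refine ⟨toR (a.1 + m + k, a.2 + n + l), ⟨_, rfl⟩,
    aux_interior (aux_orient hnc) s t hs ht (by linarith) ?_ ?_⟩
  · rw [h1, h3]; simp [toR]
  · rw [h2, h4]; simp [toR]

theorem aux_symm {p q : ℝ × ℝ} (h : TwoLatticeInOpenSeg p q) : TwoLatticeInOpenSeg q p := by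
  unfold TwoLatticeInOpenSeg at *
  rwa [openSegment_symm]

/-- If two edges of a lattice triangle each contain at least two lattice points in their
relative interiors, then the triangle contains a lattice point in its interior. -/
theorem lattice_point_in_triangle_of_two_rich_edges (a b c : ℤ × ℤ)
    (hnc : ¬ Collinear ℝ ({toR a, toR b, toR c} : Set (ℝ × ℝ)))
    (h2 : (TwoLatticeInOpenSeg (toR a) (toR b) ∧ TwoLatticeInOpenSeg (toR b) (toR c)) ∨
          (TwoLatticeInOpenSeg (toR b) (toR c) ∧ TwoLatticeInOpenSeg (toR a) (toR c)) ∨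
          (TwoLatticeInOpenSeg (toR a) (toR b) ∧ TwoLatticeInOpenSeg (toR a) (toR c))) :
    ∃ p : ℝ × ℝ, IsLatticePt p ∧
      p ∈ interior (convexHull ℝ ({toR a, toR b, toR c} : Set (ℝ × ℝ))) := by
  
  rcases h2 with ⟨h, h'⟩ | ⟨h, h'⟩ | ⟨h, h'⟩
  · rw [Set.insert_comm] at hnc ⊢
    exact aux_main b a c hnc (aux_symm h) h'
  · have e : ({toR a, toR b, toR c} : Set (ℝ × ℝ)) = {toR c, toR a, toR b} := by
      ext; simp only [Set.mem_insert_iff, Set.mem_singleton_iff]; tauto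
    rw [e] at hnc ⊢
    exact aux_main c a b hnc (aux_symm h') (aux_symm h)
  · exact aux_main a b c hnc h h'
end
end

section
/- Every triangle with vertices in ℤ × ℤ that contains no point of ℤ × ℤ in its interior has height at most 2. -/
open scoped Classical

noncomputable section

/-- Integer orientation determinant of a triple of lattice points. -/
def orientZ (a b c : ℤ × ℤ) : ℤ :=
  (b.1 - a.1) * (c.2 - a.2) - (b.2 - a.2) * (c.1 - a.1)

/-- Height of the lattice triangle `abp` with respect to the edge `ab`: `0` if `p` lies on
the line `ab`, and otherwise one plus the number of lines parallel to `ab`, strictly between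
the line `ab` and `p`, containing a lattice point. Such lines correspond to the values of
`orientZ a b ·` strictly between `0` and `orientZ a b p` attained at lattice points. -/
noncomputable def heightWrt (a b p : ℤ × ℤ) : ℕ :=
  if orientZ a b p = 0 then 0
  else 1 + {v : ℤ | ((0 < v ∧ v < orientZ a b p) ∨ (orientZ a b p < v ∧ v < 0)) ∧
      ∃ q : ℤ × ℤ, orientZ a b q = v}.ncard

/-- The height of a lattice triangle: the minimum of its heights with respect to its edges. -/
noncomputable def triHeight (a b c : ℤ × ℤ) : ℕ :=
  min (heightWrt a b c) (min (heightWrt b c a) (heightWrt c a b))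


lemma heightWrt_le_two_aux (a b p : ℤ × ℤ) (g : ℤ) (hg : 0 < g) (h1 : g ∣ b.1 - a.1)
    (h2 : g ∣ b.2 - a.2) (hD : |orientZ a b p| ≤ 2 * g) : heightWrt a b p ≤ 2 := by
  unfold heightWrt
  split_ifs with h0
  · omega
  have hsub : {v : ℤ | ((0 < v ∧ v < orientZ a b p) ∨ (orientZ a b p < v ∧ v < 0)) ∧
      ∃ q : ℤ × ℤ, orientZ a b q = v} ⊆ {(if 0 < orientZ a b p then g else -g)} := by
    rintro v ⟨hv, q, hq⟩
    have hdv : g ∣ v := by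
      rw [← hq]
      exact dvd_sub (h1.mul_right _) (h2.mul_right _)
    obtain ⟨k, rfl⟩ := hdv
    rw [abs_le] at hD
    rw [Set.mem_singleton_iff]
    rcases hv with ⟨hv1, hv2⟩ | ⟨hv1, hv2⟩
    · rw [if_pos (by omega)]
      have : 0 < k := by nlinarith
      have : k < 2 := by nlinarith
      have : k = 1 := by omega
      simp [this]
    · rw [if_neg (by omega)]
      have : k < 0 := by nlinarith
      have : -2 < k := by nlinarith
      have : k = -1 := by omega
      simp [this]
  have := Set.ncard_le_ncard hsub (Set.finite_singleton _)
  rw [Set.ncard_singleton] at this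
  omega

lemma int_main_aux (a b c : ℤ × ℤ) (hD : 0 < orientZ a b c)
    (hne : ∀ q : ℤ × ℤ, ¬ (0 < orientZ a b q ∧ 0 < orientZ b c q ∧ 0 < orientZ c a q)) :
    ∃ g : ℤ, 0 < g ∧ orientZ a b c ≤ 2 * g ∧
      ((g ∣ b.1 - a.1 ∧ g ∣ b.2 - a.2) ∨ (g ∣ c.1 - b.1 ∧ g ∣ c.2 - b.2) ∨
        (g ∣ a.1 - c.1 ∧ g ∣ a.2 - c.2)) := by
  obtain ⟨a1, a2⟩ := a
  obtain ⟨b1, b2⟩ := b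
  obtain ⟨c1, c2⟩ := c
  simp only [orientZ] at *
  obtain ⟨g, hg⟩ : ∃ g : ℤ, g = Int.gcd (b1 - a1) (b2 - a2) := ⟨_, rfl⟩
  have hd1 : g ∣ b1 - a1 := hg ▸ Int.gcd_dvd_left _ _
  have hd2 : g ∣ b2 - a2 := hg ▸ Int.gcd_dvd_right _ _
  have hbez := Int.gcd_eq_gcd_ab (b1 - a1) (b2 - a2)
  rw [← hg] at hbez
  generalize Int.gcdA (b1 - a1) (b2 - a2) = x at hbez
  generalize Int.gcdB (b1 - a1) (b2 - a2) = y at hbez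
  have hg0 : 0 ≤ g := by rw [hg]; positivity
  clear hg
  have hd1' := hd1
  have hd2' := hd2
  obtain ⟨u, hu⟩ := hd1
  obtain ⟨w, hw⟩ := hd2
  have hgpos : 0 < g := by
    rcases hg0.lt_or_eq with h | h
    · exact h
    · rw [hu, hw, ← h] at hD; simp at hD
  obtain ⟨h, hh⟩ : ∃ h, h = u * (c2 - a2) - w * (c1 - a1) := ⟨_, rfl⟩
  have hDh : (b1 - a1) * (c2 - a2) - (b2 - a2) * (c1 - a1) = g * h := by
    rw [hu, hw, hh]; ring
  rw [hDh] at hD ⊢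
  by_cases h2 : h ≤ 2
  · exact ⟨g, hgpos, by nlinarith, Or.inl ⟨hd1', hd2'⟩⟩
  push Not at h2
  have hxy : u * x + w * y = 1 := by
    have : g * (u * x + w * y) = g * 1 := by rw [hu, hw] at hbez; linarith
    exact mul_left_cancel₀ hgpos.ne' this
  obtain ⟨s, hs⟩ : ∃ s, s = (a1 - c1) * (a2 + x - c2) - (a2 - c2) * (a1 - y - c1) := ⟨_, rfl⟩
  obtain ⟨t, ht⟩ : ∃ t, t = -((s - 1) / h) := ⟨_, rfl⟩
  obtain ⟨r, hr⟩ : ∃ r, r = s + t * h := ⟨_, rfl⟩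
  have hr' : r = (s - 1) % h + 1 := by
    have := Int.mul_ediv_add_emod (s - 1) h
    rw [hr, ht]; linarith
  have hr1 : 1 ≤ r := by have := Int.emod_nonneg (s - 1) (b := h) (by omega); omega
  have hr2 : r ≤ h := by have := Int.emod_lt_of_pos (s - 1) (b := h) (by omega); omega
  clear hr' ht
  obtain ⟨q1, hq1⟩ : ∃ q, q = a1 - y + t * u := ⟨_, rfl⟩
  obtain ⟨q2, hq2⟩ : ∃ q, q = a2 + x + t * w := ⟨_, rfl⟩
  have e1 : (b1 - a1) * (q2 - a2) - (b2 - a2) * (q1 - a1) = g := by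
    rw [hu, hw, hq1, hq2]; linear_combination g * hxy
  have e3 : (a1 - c1) * (q2 - c2) - (a2 - c2) * (q1 - c1) = r := by
    rw [hr, hs, hh, hq1, hq2]; ring
  have e2 : (c1 - b1) * (q2 - b2) - (c2 - b2) * (q1 - b1) = g * h - g - r := by
    linear_combination hDh - e1 - e3
  have hk := hne (q1, q2)
  simp only [e1, e2, e3] at hk
  have hle : g * h - g - r ≤ 0 := by
    by_contra hc
    exact hk ⟨hgpos, by omega, by omega⟩
  have hg1 : g = 1 := by
    by_contra hc
    have : 2 ≤ g := by omega
    nlinarith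
  subst hg1
  have hcase : r = h ∨ r = h - 1 := by omega
  refine ⟨h, by omega, by omega, Or.inr ?_⟩
  rcases hcase with hrh | hrh
  · right
    -- q' = q - u is on the line ca
    have e : (a1 - c1) * (q2 - w - a2) - (a2 - c2) * (q1 - u - a1) = 0 := by
      linear_combination e3 + hrh + hh
    have e1' : u * (q2 - w - a2) - w * (q1 - u - a1) = 1 := by
      rw [hq1, hq2]; linear_combination hxy
    refine ⟨⟨-(q1 - u - a1), ?_⟩, ⟨-(q2 - w - a2), ?_⟩⟩
    · linear_combination (-(a1 - c1)) * e1' + u * e + (q1 - u - a1) * hh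
    · linear_combination (-(a2 - c2)) * e1' + w * e + (q2 - w - a2) * hh
  · left
    obtain rfl : u = b1 - a1 := by linarith
    obtain rfl : w = b2 - a2 := by linarith
    have e : (c1 - b1) * (q2 - b2) - (c2 - b2) * (q1 - b1) = 0 := by
      linear_combination e2 - hrh
    have e1' : (b1 - a1) * (q2 - b2) - (b2 - a2) * (q1 - b1) = 1 := by
      linear_combination e1
    refine ⟨⟨(q1 - b1), ?_⟩, ⟨(q2 - b2), ?_⟩⟩
    · linear_combination (-(c1 - b1)) * e1' + (b1 - a1) * e - (q1 - b1) * hh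
    · linear_combination (-(c2 - b2)) * e1' + (b2 - a2) * e - (q2 - b2) * hh

lemma mem_interior_aux (a b c q : ℝ × ℝ) (h1 : 0 < orient a b q) (h2 : 0 < orient b c q)
    (h3 : 0 < orient c a q) : q ∈ interior (convexHull ℝ ({a, b, c} : Set (ℝ × ℝ))) := by
  rw [mem_interior]
  refine ⟨{x | 0 < orient a b x} ∩ ({x | 0 < orient b c x} ∩ {x | 0 < orient c a x}),
    ?_, ?_, h1, h2, h3⟩
  · rintro x ⟨k1, k2, k3⟩
    simp only [Set.mem_setOf_eq] at k1 k2 k3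
    obtain ⟨D, hD⟩ : ∃ D, D = orient a b x + orient b c x + orient c a x := ⟨_, rfl⟩
    have hDpos : 0 < D := by linarith
    have hconv := convex_convexHull ℝ ({a, b, c} : Set (ℝ × ℝ))
    have hm := hconv.sum_mem (t := Finset.univ) (w := ![orient b c x / D, orient c a x / D,
      orient a b x / D]) (z := ![a, b, c])
      (by intro i _; fin_cases i <;> simp <;> positivity)
      (by simp [Fin.sum_univ_three]; field_simp; linarith)
      (by intro i _; fin_cases i <;> simp <;> apply subset_convexHull <;> simp)
    convert hm using 1
    simp only [Fin.sum_univ_three, Matrix.cons_val_zero, Matrix.cons_val_one, Matrix.cons_val]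
    ext
    · simp only [Prod.fst_add, Prod.smul_fst, smul_eq_mul]
      field_simp
      rw [hD]; simp only [orient]; ring
    · simp only [Prod.snd_add, Prod.smul_snd, smul_eq_mul]
      field_simp
      rw [hD]; simp only [orient]; ring
  · have ho : ∀ p r : ℝ × ℝ, IsOpen {x | 0 < orient p r x} := by
      intro p r
      apply isOpen_lt continuous_const
      unfold orient
      fun_prop
    exact (ho _ _).inter ((ho _ _).inter (ho _ _))

lemma orient_toR_aux (a b c : ℤ × ℤ) : orient (toR a) (toR b) (toR c) = (orientZ a b c : ℝ) := by
  simp [orient, orientZ, toR]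

lemma int_empty_aux (a b c : ℤ × ℤ)
    (hempty : ∀ p : ℤ × ℤ,
      toR p ∉ interior (convexHull ℝ ({toR a, toR b, toR c} : Set (ℝ × ℝ)))) (q : ℤ × ℤ) :
    ¬ (0 < orientZ a b q ∧ 0 < orientZ b c q ∧ 0 < orientZ c a q) := by
  rintro ⟨h1, h2, h3⟩
  apply hempty q
  apply mem_interior_aux <;> rw [orient_toR_aux] <;> exact_mod_cast ‹_›

lemma tri_aux (a b c : ℤ × ℤ) (g : ℤ) (hg : 0 < g) (hD : |orientZ a b c| ≤ 2 * g)
    (h : (g ∣ b.1 - a.1 ∧ g ∣ b.2 - a.2) ∨ (g ∣ c.1 - b.1 ∧ g ∣ c.2 - b.2) ∨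
        (g ∣ a.1 - c.1 ∧ g ∣ a.2 - c.2)) : triHeight a b c ≤ 2 := by
  have e1 : orientZ b c a = orientZ a b c := by simp only [orientZ]; ring
  have e2 : orientZ c a b = orientZ a b c := by simp only [orientZ]; ring
  unfold triHeight
  rcases h with ⟨h1, h2⟩ | ⟨h1, h2⟩ | ⟨h1, h2⟩
  · exact (min_le_left _ _).trans (heightWrt_le_two_aux _ _ _ g hg h1 h2 hD)
  · exact (min_le_right _ _).trans ((min_le_left _ _).trans
      (heightWrt_le_two_aux _ _ _ g hg h1 h2 (e1 ▸ hD)))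
  · exact (min_le_right _ _).trans ((min_le_right _ _).trans
      (heightWrt_le_two_aux _ _ _ g hg h1 h2 (e2 ▸ hD)))

/-- Any lattice triangle with no lattice point in its interior has height at most `2`. -/
theorem interior_empty_lattice_triangle_height_le_two (a b c : ℤ × ℤ)
    (hnc : ¬ Collinear ℝ ({toR a, toR b, toR c} : Set (ℝ × ℝ)))
    (hempty : ∀ p : ℤ × ℤ,
      toR p ∉ interior (convexHull ℝ ({toR a, toR b, toR c} : Set (ℝ × ℝ)))) :
    triHeight a b c ≤ 2 := by
  rcases lt_trichotomy (orientZ a b c) 0 with h | h | h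
  · have e : orientZ b a c = - orientZ a b c := by simp only [orientZ]; ring
    have hempty' : ∀ p : ℤ × ℤ,
        toR p ∉ interior (convexHull ℝ ({toR b, toR a, toR c} : Set (ℝ × ℝ))) := by
      intro p
      rw [Set.insert_comm]
      exact hempty p
    obtain ⟨g, hg, hD, hor⟩ := int_main_aux b a c (by omega) (int_empty_aux b a c hempty')
    refine tri_aux a b c g hg (by rw [abs_of_neg h]; omega) ?_
    rcases hor with ⟨h1, h2⟩ | ⟨h1, h2⟩ | ⟨h1, h2⟩
    · exact Or.inl ⟨(dvd_sub_comm).mp h1, (dvd_sub_comm).mp h2⟩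
    · exact Or.inr (Or.inr ⟨(dvd_sub_comm).mp h1, (dvd_sub_comm).mp h2⟩)
    · exact Or.inr (Or.inl ⟨(dvd_sub_comm).mp h1, (dvd_sub_comm).mp h2⟩)
  · unfold triHeight heightWrt
    simp [h]
  · obtain ⟨g, hg, hD, hor⟩ := int_main_aux a b c h (int_empty_aux a b c hempty)
    exact tri_aux a b c g hg (by rw [abs_of_pos h]; omega) hor
end
end
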